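/- arXiv:2209.01197 — 2 statements merged into one kernel-verified Lean document; each statement's English description precedes it below -/
import Mathlib

section
/- Let L_2G be the first-order language with a binary function symbol +, constant symbols 0 and 1, a binary relation symbol <, and a unary relation symbol Z. Let M and N be L_2G-structures such that in each structure: the universe equipped with the interpretations of +, 0, < is a divisible ordered abelian group, and the set defined by Z is an integer part whose least positive element equals the interpretation of 1. Then M and N are elementarily equivalent (they satisfy the same L_2G-sentences). In other words, the theory GG of divisible ordered abelian groups with a distinguished integer part with least positive element 1 is complete. -/
open FirstOrder

/-- The language `L_2G` with constants `0`, `1`, a binary function `+`, a unary relation `Z`,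
and a binary relation `<`. -/
def L2G : FirstOrder.Language where
  Functions n := match n with
    | 0 => Fin 2
    | 2 => Unit
    | _ => Empty
  Relations n := match n with
    | 1 => Unit
    | 2 => Unit
    | _ => Empty

namespace L2G

def zeroSym : L2G.Functions 0 := (0 : Fin 2)
def oneSym : L2G.Functions 0 := (1 : Fin 2)
def addSym : L2G.Functions 2 := Unit.unit
def zSym : L2G.Relations 1 := Unit.unit
def ltSym : L2G.Relations 2 := Unit.unit

variable {M : Type*} [L2G.Structure M]

/-- The interpretation of `+` in an `L2G`-structure. -/
def add (x y : M) : M := Language.Structure.funMap addSym ![x, y]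

/-- The interpretation of `0` in an `L2G`-structure. -/
def zero (M : Type*) [L2G.Structure M] : M := Language.Structure.funMap zeroSym ![]

/-- The interpretation of `1` in an `L2G`-structure. -/
def one (M : Type*) [L2G.Structure M] : M := Language.Structure.funMap oneSym ![]

/-- The interpretation of `<` in an `L2G`-structure. -/
def lt (x y : M) : Prop := Language.Structure.RelMap ltSym ![x, y]

/-- The interpretation of `Z` in an `L2G`-structure. -/
def inZ (x : M) : Prop := Language.Structure.RelMap zSym ![x]

/-- `n`-fold sum `x + ⋯ + x` in an `L2G`-structure. -/
def nsmul : ℕ → M → M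
  | 0, _ => zero M
  | n + 1, x => add x (nsmul n x)

/-- An `L2G`-structure is a model of `GG` if its universe with `+`, `0`, `<` is a divisible
ordered abelian group and `Z` defines an integer part whose least positive element is `1`. -/
def IsGGStructure (M : Type*) [L2G.Structure M] : Prop :=
  -- abelian group
  (∀ x y z : M, add (add x y) z = add x (add y z)) ∧
  (∀ x y : M, add x y = add y x) ∧
  (∀ x : M, add x (zero M) = x) ∧
  (∀ x : M, ∃ y : M, add x y = zero M) ∧
  -- linear order
  (∀ x : M, ¬ lt x x) ∧
  (∀ x y z : M, lt x y → lt y z → lt x z) ∧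
  (∀ x y : M, lt x y ∨ x = y ∨ lt y x) ∧
  -- compatibility of the order with addition
  (∀ x y z : M, lt x y → lt (add x z) (add y z)) ∧
  -- divisibility
  (∀ (x : M) (n : ℕ), 0 < n → ∃ y : M, nsmul n y = x) ∧
  -- Z defines a subgroup
  inZ (zero M) ∧
  (∀ x y : M, inZ x → inZ y → inZ (add x y)) ∧
  (∀ x y : M, inZ x → add x y = zero M → inZ y) ∧
  -- 1 is the least positive element of Z
  inZ (one M) ∧ lt (zero M) (one M) ∧
  (∀ x : M, inZ x → lt (zero M) x → ¬ lt x (one M)) ∧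
  -- Z is an integer part
  (∀ x : M, ∃ n : M, inZ n ∧ ¬ lt x n ∧ lt x (add n (one M)))

end L2G

namespace GGproof

set_option linter.unusedSectionVars false
set_option linter.unusedVariables false
set_option linter.style.haveILetI false

structure GG {M : Type*} [AddCommGroup M] [LinearOrder M] [IsOrderedAddMonoid M]
    (Z : AddSubgroup M) (e : M) : Prop where
  div : ∀ (x : M) (n : ℕ), 0 < n → ∃ y : M, n • y = x
  mem : e ∈ Z
  pos : 0 < e
  least : ∀ x ∈ Z, 0 < x → e ≤ x
  floor : ∀ x, ∃ n ∈ Z, n ≤ x ∧ x < n + e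

def ev {M : Type*} [AddCommGroup M] {n : ℕ} (x : Fin n → M) (a : Fin n → ℤ) : M :=
  ∑ i, a i • x i

section ev
variable {M : Type*} [AddCommGroup M] {n : ℕ}

lemma ev_add (x : Fin n → M) (a b : Fin n → ℤ) : ev x (a + b) = ev x a + ev x b := by
  simp [ev, add_smul, Finset.sum_add_distrib]

lemma ev_smul (x : Fin n → M) (k : ℤ) (a : Fin n → ℤ) : ev x (k • a) = k • ev x a := by
  simp [ev, mul_smul, Finset.smul_sum]

lemma ev_neg (x : Fin n → M) (a : Fin n → ℤ) : ev x (-a) = - ev x a := by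
  simp [ev]

lemma ev_sub (x : Fin n → M) (a b : Fin n → ℤ) : ev x (a - b) = ev x a - ev x b := by
  simp [sub_eq_add_neg, ev_add, ev_neg]

lemma ev_single (x : Fin n → M) (i : Fin n) (k : ℤ) : ev x (Pi.single i k) = k • x i := by
  simp [ev, Pi.single_apply, ite_smul]

lemma ev_add_left (x y : Fin n → M) (a : Fin n → ℤ) : ev (x + y) a = ev x a + ev y a := by
  simp [ev, Finset.sum_add_distrib]

lemma ev_snoc (x : Fin n → M) (y : M) (a : Fin (n+1) → ℤ) :
    ev (Fin.snoc x y : Fin (n+1) → M) a = ev x (fun i => a i.castSucc) + a (Fin.last n) • y := by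
  simp [ev, Fin.sum_univ_castSucc]

lemma ev_mem (Z : AddSubgroup M) (x : Fin n → M) (hx : ∀ i, x i ∈ Z) (a : Fin n → ℤ) :
    ev x a ∈ Z := Z.sum_mem fun i _ => Z.zsmul_mem (hx i) _

end ev

section one
variable {M : Type*} [AddCommGroup M] [LinearOrder M] [IsOrderedAddMonoid M]
  {Z : AddSubgroup M} {e : M}

lemma GG.dense (h : GG Z e) : DenselyOrdered M := by
  constructor
  intro a b hab
  obtain ⟨y, hy⟩ := h.div (a + b) 2 (by norm_num)
  rw [two_nsmul] at hy
  refine ⟨y, ?_, ?_⟩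
  · by_contra hc
    push Not at hc
    have : y + y < a + b := by
      calc y + y ≤ a + a := add_le_add hc hc
        _ < a + b := by simpa
    exact this.ne hy
  · by_contra hc
    push Not at hc
    have : a + b < y + y := by
      calc a + b < b + b := by simpa
        _ ≤ y + y := add_le_add hc hc
    exact this.ne hy.symm

lemma GG.nontriv (h : GG Z e) : Nontrivial M := ⟨⟨0, e, h.pos.ne⟩⟩

lemma GG.smul_lt (h : GG Z e) (a b : ℤ) : a • e < b • e ↔ a < b :=
  zsmul_lt_zsmul_iff_left h.pos

lemma GG.lt_iff (h : GG Z e) {x y : M} (hx : x ∈ Z) (hy : y ∈ Z) : x < y ↔ x + e ≤ y := by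
  constructor
  · intro hxy
    have := h.least (y - x) (Z.sub_mem hy hx) (sub_pos.2 hxy)
    rwa [le_sub_iff_add_le, add_comm] at this
  · intro hxy
    exact lt_of_lt_of_le (lt_add_of_pos_right x h.pos) hxy

/-- an element between `-B` and `B` has a standard floor -/
lemma GG.std_floor (h : GG Z e) (B : ℕ) : ∀ x : M, 0 ≤ x → x < (B : ℤ) • e →
    ∃ k : ℤ, 0 ≤ k ∧ k < B ∧ k • e ≤ x ∧ x < (k + 1) • e := by
  induction B with
  | zero =>
    intro x h0 h1
    simp at h1
    exact absurd h1 (not_lt.2 h0)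
  | succ B ih =>
    intro x h0 h1
    by_cases hx : x < (B : ℤ) • e
    · obtain ⟨k, h1, h2, h3, h4⟩ := ih x h0 hx
      exact ⟨k, h1, by push_cast; omega, h3, h4⟩
    · exact ⟨B, by positivity, by push_cast; omega, not_lt.1 hx, by simpa using h1⟩

lemma GG.std_floor' (h : GG Z e) (B : ℕ) (x : M) (h0 : -((B : ℤ) • e) ≤ x)
    (h1 : x < (B : ℤ) • e) :
    ∃ k : ℤ, |k| ≤ B ∧ k • e ≤ x ∧ x < (k + 1) • e := by
  obtain ⟨k, h1, h2, h3, h4⟩ := h.std_floor (2 * B) (x + (B : ℤ) • e)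
    (by rwa [neg_le_iff_add_nonneg] at h0) (by
      push_cast; rw [two_mul, add_smul]; simpa using h1)
  refine ⟨k - B, ?_, ?_, ?_⟩
  · rw [abs_le]; push_cast at h2; omega
  · rw [sub_smul, sub_le_iff_le_add]; exact h3
  · have : ((k - B + 1 : ℤ)) = (k + 1) - B := by ring
    rw [this, sub_smul, lt_sub_iff_add_lt]; exact h4

lemma GG.residue (h : GG Z e) (D : ℕ) (hD : 0 < D) {x : M} (hx : x ∈ Z) :
    ∃ z ∈ Z, ∃ c : ℤ, 0 ≤ c ∧ c < D ∧ x = (D : ℤ) • z + c • e := by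
  obtain ⟨y, hy⟩ := h.div x D hD
  obtain ⟨z, hz, h1, h2⟩ := h.floor y
  have hZ : x - (D : ℤ) • z ∈ Z := Z.sub_mem hx (Z.zsmul_mem hz _)
  have e1 : x - (D : ℤ) • z = D • (y - z) := by rw [smul_sub, hy, natCast_zsmul]
  obtain ⟨k, hk0, hk1, hk2, hk3⟩ := h.std_floor D (x - (D : ℤ) • z)
    (by rw [e1]; exact nsmul_nonneg (sub_nonneg.2 h1) _)
    (by
      rw [e1, natCast_zsmul]
      exact nsmul_lt_nsmul_right hD.ne' (sub_lt_iff_lt_add'.2 h2))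
  refine ⟨z, hz, k, hk0, hk1, ?_⟩
  have : x - (D : ℤ) • z = k • e := by
    by_contra hne
    have hlt := lt_of_le_of_ne hk2 (Ne.symm hne)
    rw [h.lt_iff (Z.zsmul_mem h.mem _) hZ] at hlt
    rw [add_smul, one_smul] at hk3
    exact absurd hlt (not_le.2 hk3)
  rw [← this]; abel

end one

section two
variable {M : Type*} [AddCommGroup M] [LinearOrder M] [IsOrderedAddMonoid M]
  {Z : AddSubgroup M} {e : M}
  {N : Type*} [AddCommGroup N] [LinearOrder N] [IsOrderedAddMonoid N]
  {Z' : AddSubgroup N} {e' : N}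

def E {n : ℕ} (K : ℕ) (x : Fin n → M) (x' : Fin n → N) : Prop :=
  ∀ a : Fin n → ℤ, (∀ i, |a i| ≤ K) → (0 < ev x a ↔ 0 < ev x' a)

lemma E.symm {n : ℕ} {K : ℕ} {x : Fin n → M} {x' : Fin n → N} (h : E K x x') : E K x' x :=
  fun a ha => (h a ha).symm

lemma E.mono {n : ℕ} {K K' : ℕ} (hK : K ≤ K') {x : Fin n → M} {x' : Fin n → N}
    (h : E K' x x') : E K x x' :=
  fun a ha => h a fun i => (ha i).trans (by exact_mod_cast hK)

lemma E.lt {n : ℕ} {K : ℕ} {x : Fin n → M} {x' : Fin n → N} (h : E K x x')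
    (a b : Fin n → ℤ) (hab : ∀ i, |b i - a i| ≤ K) :
    ev x a < ev x b ↔ ev x' a < ev x' b := by
  have := h (b - a) hab
  rwa [ev_sub, ev_sub, sub_pos, sub_pos] at this

/-- reduction of the extension of `E` to a location problem -/
lemma E.extend {n : ℕ} {K L : ℕ} (hL : 0 < L) (hKL : ∀ b : ℕ, 0 < b → b ≤ K → b ∣ L)
    {x : Fin n → M} {x' : Fin n → N} (h : E (L * K) x x') (y : M) (y' : N)
    (hloc : ∀ g : Fin n → ℤ, (∀ i, |g i| ≤ (L * K : ℕ)) →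
      (ev x g < (L : ℤ) • y ↔ ev x' g < (L : ℤ) • y') ∧
      ((L : ℤ) • y < ev x g ↔ (L : ℤ) • y' < ev x' g)) :
    E K (Fin.snoc x y : Fin (n+1) → M) (Fin.snoc x' y' : Fin (n+1) → N) := by
  intro a ha
  rw [ev_snoc, ev_snoc]
  set g : Fin n → ℤ := fun i => a i.castSucc with hg
  have hga : ∀ i, |g i| ≤ K := fun i => ha _
  have hb := ha (Fin.last n)
  set b := a (Fin.last n) with hbdef
  have key : ∀ q : ℕ, q ∣ L → ∀ s : ℤ, |s| = 1 → ∀ i, |((s * (q : ℤ)) • g) i| ≤ (L * K : ℕ) := by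
    intro q hq s hs i
    have : q ≤ L := Nat.le_of_dvd hL hq
    simp only [Pi.smul_apply, smul_eq_mul, abs_mul, hs, one_mul, Nat.abs_cast]
    push_cast
    exact mul_le_mul (by exact_mod_cast this) (hga i) (abs_nonneg _) (by positivity)
  rcases lt_trichotomy b 0 with hb0 | hb0 | hb0
  · obtain ⟨c, hc⟩ : ∃ c : ℕ, b = -(c : ℤ) := ⟨b.natAbs, by omega⟩
    have hcK : c ≤ K := by rw [hc] at hb; simpa using hb
    obtain ⟨q, hq⟩ := hKL c (by omega) hcK
    have hq0 : 0 < q := by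
      rcases Nat.eq_zero_or_pos q with h | h
      · simp [h] at hq; omega
      · exact h
    have := (hloc _ (key q ⟨c, by rw [hq, mul_comm]⟩ 1 (by simp))).2
    rw [ev_smul, ev_smul, hq, one_mul] at this
    have h1 : ∀ {G : Type _} [AddCommGroup G] [LinearOrder G] [IsOrderedAddMonoid G] (u v : G),
        (0 < u + b • v) ↔ ((c * q : ℕ) : ℤ) • v < (q : ℤ) • u := by
      intro G _ _ _ u v
      rw [mul_comm, Nat.cast_mul, mul_smul, zsmul_lt_zsmul_iff_right (by exact_mod_cast hq0), hc,
        neg_smul, ← sub_eq_add_neg, sub_pos]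
    have h2 : ∀ {G : Type _} [AddCommGroup G] [LinearOrder G] [IsOrderedAddMonoid G] (u v : G),
        (0 < u + b • v) ↔ ((c * q : ℕ) : ℤ) • v < (q : ℤ) • u := by
      intro G _ _ _ u v
      rw [mul_comm, Nat.cast_mul, mul_smul, zsmul_lt_zsmul_iff_right (by exact_mod_cast hq0), hc,
        neg_smul, ← sub_eq_add_neg, sub_pos]
    rw [h1, h2, this]
  · rw [hb0, zero_smul, zero_smul, add_zero, add_zero]
    refine h g fun i => (hga i).trans ?_
    push_cast
    exact le_mul_of_one_le_left (by positivity) (by exact_mod_cast hL)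
  · obtain ⟨c, hc⟩ : ∃ c : ℕ, b = (c : ℤ) := ⟨b.natAbs, by omega⟩
    have hcK : c ≤ K := by rw [hc] at hb; simpa using hb
    obtain ⟨q, hq⟩ := hKL c (by omega) hcK
    have hq0 : 0 < q := by
      rcases Nat.eq_zero_or_pos q with h | h
      · simp [h] at hq; omega
      · exact h
    have := (hloc _ (key q ⟨c, by rw [hq, mul_comm]⟩ (-1) (by simp))).1
    rw [ev_smul, ev_smul, hq] at this
    have h1 : ∀ {G : Type _} [AddCommGroup G] [LinearOrder G] [IsOrderedAddMonoid G] (u v : G),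
        (0 < u + b • v) ↔ (-1 * (q : ℤ)) • u < ((c * q : ℕ) : ℤ) • v := by
      intro G _ _ _ u v
      rw [mul_comm c, mul_comm (-1) (q : ℤ), Nat.cast_mul, mul_smul, mul_smul,
        zsmul_lt_zsmul_iff_right (by exact_mod_cast hq0), hc,
        neg_smul, one_smul, neg_lt_iff_pos_add']
    have h2 : ∀ {G : Type _} [AddCommGroup G] [LinearOrder G] [IsOrderedAddMonoid G] (u v : G),
        (0 < u + b • v) ↔ (-1 * (q : ℤ)) • u < ((c * q : ℕ) : ℤ) • v := by
      intro G _ _ _ u v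
      rw [mul_comm c, mul_comm (-1) (q : ℤ), Nat.cast_mul, mul_smul, mul_smul,
        zsmul_lt_zsmul_iff_right (by exact_mod_cast hq0), hc,
        neg_smul, one_smul, neg_lt_iff_pos_add']
    rw [h1, h2, this]

/-- location in a dense order -/
lemma locate_dense {I : Type*} (s : Finset I) (h' : GG Z' e') (P : I → M) (P' : I → N)
    (hP : ∀ i ∈ s, ∀ j ∈ s, P i < P j ↔ P' i < P' j) (Y : M) :
    ∃ Y' : N, ∀ i ∈ s, (P i < Y ↔ P' i < Y') ∧ (Y < P i ↔ Y' < P' i) := by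
  classical
  have := h'.dense
  have := h'.nontriv
  by_cases hex : ∃ i ∈ s, P i = Y
  · obtain ⟨j, hj, rfl⟩ := hex
    exact ⟨P' j, fun i hi => ⟨hP i hi j hj, hP j hj i hi⟩⟩
  · push Not at hex
    obtain ⟨Y', h1, h2⟩ := Order.exists_between_finsets
      ((s.filter fun i => P i < Y).image P') ((s.filter fun i => Y < P i).image P') (by
        intro a ha b hb
        simp only [Finset.mem_image, Finset.mem_filter] at ha hb
        obtain ⟨i, ⟨hi, hi'⟩, rfl⟩ := ha
        obtain ⟨j, ⟨hj, hj'⟩, rfl⟩ := hb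
        exact (hP i hi j hj).1 (hi'.trans hj'))
    refine ⟨Y', fun i hi => ?_⟩
    rcases lt_or_gt_of_ne (hex i hi) with hlt | hlt
    · have := h1 (P' i) (Finset.mem_image_of_mem _ (Finset.mem_filter.2 ⟨hi, hlt⟩))
      exact ⟨iff_of_true hlt this, iff_of_false hlt.not_gt this.not_gt⟩
    · have := h2 (P' i) (Finset.mem_image_of_mem _ (Finset.mem_filter.2 ⟨hi, hlt⟩))
      exact ⟨iff_of_false hlt.not_gt this.not_gt, iff_of_true hlt this⟩

lemma locate_Z_aux {I : Type*} (s : Finset I) (h : GG Z e) (D : ℕ) (hD : 0 < D)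
    (P : I → M) (P' : I → N) (hPZ : ∀ i ∈ s, P i ∈ Z)
    (hP : ∀ i ∈ s, ∀ j ∈ s, ∀ d : ℤ, |d| ≤ D → (P i < P j + d • e ↔ P' i < P' j + d • e'))
    (Y : M) (hY : Y ∈ Z) (hex : ∃ j ∈ s, P j ≤ Y) :
    ∃ j ∈ s, ∃ d : ℤ, (∃ z ∈ Z, Y = P j + d • e + (D : ℤ) • z) ∧
      ∀ i ∈ s, (P i < Y ↔ P' i < P' j + d • e') ∧ (Y < P i ↔ P' j + d • e' < P' i) := by
  classical
  obtain ⟨j, hj, hjmax⟩ := Finset.exists_max_image (s.filter fun i => P i ≤ Y) P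
    (by obtain ⟨j, hj, hjY⟩ := hex; exact ⟨j, Finset.mem_filter.2 ⟨hj, hjY⟩⟩)
  obtain ⟨hjs, hjY⟩ := Finset.mem_filter.1 hj
  have hP2 : ∀ i ∈ s, ∀ j ∈ s, ∀ d : ℤ, |d| ≤ D →
      (P j + d • e < P i ↔ P' j + d • e' < P' i) := by
    intro i hi j hj d hd
    have := hP j hj i hi (-d) (by simpa using hd)
    rwa [neg_smul, neg_smul, ← sub_eq_add_neg, ← sub_eq_add_neg, lt_sub_iff_add_lt,
      lt_sub_iff_add_lt] at this
  rcases hjY.eq_or_lt with heq | hlt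
  · refine ⟨j, hjs, 0, ⟨0, Z.zero_mem, by simp [heq]⟩, fun i hi => ?_⟩
    have h1 := hP i hi j hjs 0 (by simp)
    have h2 := hP2 i hi j hjs 0 (by simp)
    rw [← heq]
    simpa using And.intro h1 h2
  · have hle := (h.lt_iff (hPZ j hjs) hY).1 hlt
    obtain ⟨z, hz, c, hc0, hc1, hzc⟩ := h.residue D hD
      (Z.sub_mem (Z.sub_mem hY (hPZ j hjs)) h.mem)
    have hYeq : Y = P j + (c + 1) • e + (D : ℤ) • z := by
      have : Y = (Y - P j - e) + P j + e := by abel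
      rw [this, hzc, add_smul, one_smul]; abel
    have hz0 : 0 ≤ z := by
      by_contra hneg
      push Not at hneg
      rw [h.lt_iff hz Z.zero_mem] at hneg
      have h1 : (D : ℤ) • (z + e) ≤ 0 := by
        have := zsmul_le_zsmul_right (α := M) (n := (D : ℤ)) (by positivity) hneg
        simpa using this
      have h2 : 0 ≤ (D : ℤ) • z + c • e := by
        rw [← hzc, sub_sub]; exact sub_nonneg.2 hle
      have h3 : c • e < (D : ℤ) • e := (h.smul_lt _ _).2 hc1
      rw [smul_add] at h1
      have : (D : ℤ) • z + c • e < 0 := lt_of_lt_of_le (by simpa using h3) h1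
      exact absurd h2 (not_le.2 this)
    have hdY : P j + (c + 1) • e ≤ Y := by
      rw [hYeq]
      exact le_add_of_nonneg_right (zsmul_nonneg hz0 (by positivity))
    have hcD : |c + 1| ≤ D := by rw [abs_le]; omega
    have hjd : P j < P j + (c + 1) • e := by
      apply lt_add_of_pos_right
      exact zsmul_pos h.pos (by omega)
    refine ⟨j, hjs, c + 1, ⟨z, hz, hYeq⟩, fun i hi => ⟨?_, ?_⟩⟩
    · rw [← hP i hi j hjs _ hcD]
      constructor
      · intro hi2
        exact (hjmax i (Finset.mem_filter.2 ⟨hi, hi2.le⟩)).trans_lt hjd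
      · intro hi2
        exact hi2.trans_le hdY
    · rw [← hP2 i hi j hjs _ hcD]
      constructor
      · intro hi2
        exact hdY.trans_lt hi2
      · intro hi2
        by_contra hcon
        push Not at hcon
        exact absurd (hjmax i (Finset.mem_filter.2 ⟨hi, hcon⟩)) (not_le.2 (hjd.trans hi2))

lemma locate_Z {I : Type*} (s : Finset I) (hs : s.Nonempty) (h : GG Z e) (D : ℕ) (hD : 0 < D)
    (P : I → M) (P' : I → N) (hPZ : ∀ i ∈ s, P i ∈ Z)
    (hP : ∀ i ∈ s, ∀ j ∈ s, ∀ d : ℤ, |d| ≤ D → (P i < P j + d • e ↔ P' i < P' j + d • e'))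
    (Y : M) (hY : Y ∈ Z) :
    ∃ j ∈ s, ∃ d : ℤ, (∃ z ∈ Z, Y = P j + d • e + (D : ℤ) • z) ∧
      ∀ i ∈ s, (P i < Y ↔ P' i < P' j + d • e') ∧ (Y < P i ↔ P' j + d • e' < P' i) := by
  by_cases hex : ∃ j ∈ s, P j ≤ Y
  · exact locate_Z_aux s h D hD P P' hPZ hP Y hY hex
  · push Not at hex
    obtain ⟨j0, hj0⟩ := hs
    obtain ⟨j, hj, d, ⟨z, hz, hYz⟩, hloc⟩ := locate_Z_aux (e' := e') s h D hD (fun i => - P i)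
      (fun i => - P' i) (fun i hi => Z.neg_mem (hPZ i hi)) (by
        intro i hi j hj d hd
        have := hP j hj i hi d hd
        rw [neg_lt_iff_pos_add', ← add_assoc, ← sub_eq_add_neg, neg_lt_iff_pos_add', ← add_assoc,
          ← sub_eq_add_neg]
        rw [← sub_pos, ← sub_pos (b := P' j)] at this
        convert this using 2 <;> abel) (-Y) (Z.neg_mem hY) ⟨j0, hj0, neg_le_neg (hex j0 hj0).le⟩
    refine ⟨j, hj, -d, ⟨-z, Z.neg_mem hz, ?_⟩, fun i hi => ?_⟩
    · rw [← neg_inj, hYz]; simp only [neg_smul, smul_neg]; abel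
    · obtain ⟨h1, h2⟩ := hloc i hi
      have e1 : P' j + -d • e' = -(-P' j + d • e') := by simp only [neg_smul]; abel
      rw [e1]
      constructor
      · rw [← neg_lt_neg_iff, h2, lt_neg]
      · rw [← neg_lt_neg_iff, h1, neg_lt]

/-- congruence modulo `m` across models -/
def Cong (Z : AddSubgroup M) (e : M) (Z' : AddSubgroup N) (e' : N) (m : ℕ) (x : M) (x' : N) : Prop :=
  ∃ c : ℤ, ∃ z ∈ Z, ∃ z' ∈ Z', x = c • e + (m : ℤ) • z ∧ x' = c • e' + (m : ℤ) • z'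

lemma Cong.symm {m : ℕ} {x : M} {x' : N} (h : Cong Z e Z' e' m x x') : Cong Z' e' Z e m x' x := by
  obtain ⟨c, z, hz, z', hz', h1, h2⟩ := h
  exact ⟨c, z', hz', z, hz, h2, h1⟩

lemma Cong.mono {m m' : ℕ} (hm : m ∣ m') {x : M} {x' : N} (h : Cong Z e Z' e' m' x x') :
    Cong Z e Z' e' m x x' := by
  obtain ⟨c, z, hz, z', hz', h1, h2⟩ := h
  obtain ⟨k, rfl⟩ := hm
  refine ⟨c, (k : ℤ) • z, Z.zsmul_mem hz _, (k : ℤ) • z', Z'.zsmul_mem hz' _, ?_, ?_⟩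
  · rw [h1, smul_smul]; push_cast; rfl
  · rw [h2, smul_smul]; push_cast; rfl

lemma Cong.ev {m n : ℕ} {x : Fin n → M} {x' : Fin n → N} (h : ∀ i, Cong Z e Z' e' m (x i) (x' i))
    (a : Fin n → ℤ) : Cong Z e Z' e' m (ev x a) (ev x' a) := by
  choose c z hz z' hz' h1 h2 using h
  refine ⟨∑ i, a i * c i, GGproof.ev z a, ev_mem Z z hz a, GGproof.ev z' a, ev_mem Z' z' hz' a, ?_, ?_⟩
  · simp only [GGproof.ev, h1, smul_add, Finset.sum_add_distrib, Finset.sum_smul, mul_smul,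
      Finset.smul_sum]
    congr 1
    exact Finset.sum_congr rfl fun i _ => smul_comm _ _ _
  · simp only [GGproof.ev, h2, smul_add, Finset.sum_add_distrib, Finset.sum_smul, mul_smul,
      Finset.smul_sum]
    congr 1
    exact Finset.sum_congr rfl fun i _ => smul_comm _ _ _

noncomputable def box (n K : ℕ) : Finset (Fin n → ℤ) := Fintype.piFinset fun _ => Finset.Icc (-(K : ℤ)) K

lemma mem_box {n K : ℕ} {g : Fin n → ℤ} : g ∈ box n K ↔ ∀ i, |g i| ≤ K := by
  simp [box, abs_le]

lemma fact_dvd (K : ℕ) : ∀ b : ℕ, 0 < b → b ≤ K → b ∣ K.factorial :=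
  fun _ h0 h1 => Nat.dvd_factorial h0 h1

lemma forth_R {n K K' : ℕ} (hK' : 2 * (K.factorial * K) ≤ K') (h' : GG Z' e')
    {x : Fin n → M} {x' : Fin n → N} (h : E K' x x') (y : M) :
    ∃ y' : N, E K (Fin.snoc x y : Fin (n+1) → M) (Fin.snoc x' y' : Fin (n+1) → N) := by
  have hL := K.factorial_pos
  obtain ⟨Y', hY'⟩ := locate_dense (box n (K.factorial * K)) h' (ev x) (ev x') (by
    intro i hi j hj
    rw [mem_box] at hi hj
    refine h.lt i j fun k => ?_
    have := abs_sub (j k) (i k)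
    have := hi k
    have := hj k
    have : ((2 * (K.factorial * K) : ℕ) : ℤ) ≤ K' := by exact_mod_cast hK'
    push_cast at *
    linarith) ((K.factorial : ℤ) • y)
  obtain ⟨y', rfl⟩ := h'.div Y' _ hL
  refine ⟨y', E.extend hL (fact_dvd K) (h.mono (by omega)) y y' fun g hg => ?_⟩
  have e1 : (K.factorial : ℤ) • y' = K.factorial • y' := natCast_zsmul _ _
  rw [e1]
  exact hY' g (mem_box.2 hg)

lemma forth_Z {n K K' m : ℕ} (hm : 0 < m)
    (hK' : 2 * (K.factorial * K) + K.factorial * m ≤ K') (hG : GG Z e) (h' : GG Z' e')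
    {x : Fin (n+1) → M} {x' : Fin (n+1) → N} (hx0 : x 0 = e) (hx0' : x' 0 = e')
    (hxZ : ∀ i, x i ∈ Z) (h : E K' x x')
    (hc : ∀ i, Cong Z e Z' e' (K.factorial * m) (x i) (x' i)) (y : M) (hy : y ∈ Z) :
    ∃ y' ∈ Z', E K (Fin.snoc x y : Fin (n+2) → M) (Fin.snoc x' y' : Fin (n+2) → N) ∧
      Cong Z e Z' e' m y y' := by
  have hL := K.factorial_pos
  obtain ⟨j, hj, d, ⟨z, hz, hYz⟩, hloc⟩ := locate_Z (e' := e') (box (n+1) (K.factorial * K))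
    ⟨0, by rw [mem_box]; intro i; simp; positivity⟩ hG
    (K.factorial * m) (by positivity) (ev x) (ev x') (fun i _ => ev_mem Z x hxZ i) (by
    intro i hi j hj d hd
    rw [mem_box] at hi hj
    have := h.lt i (j + Pi.single 0 d) fun k => ?_
    · rwa [ev_add, ev_add, ev_single, ev_single, hx0, hx0'] at this
    · have h1 := abs_sub (j k + (Pi.single 0 d : Fin (n+1) → ℤ) k) (i k)
      have h2 := abs_add_le (j k) ((Pi.single 0 d : Fin (n+1) → ℤ) k)
      have h3 : |(Pi.single 0 d : Fin (n+1) → ℤ) k| ≤ |d| := by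
        rcases eq_or_ne k 0 with rfl | hk
        · simp
        · simp [hk]
      have := hi k
      have := hj k
      have : ((2 * (K.factorial * K) + K.factorial * m : ℕ) : ℤ) ≤ K' := by exact_mod_cast hK'
      simp only [Pi.add_apply]
      push_cast at *
      linarith) ((K.factorial : ℤ) • y) (Z.zsmul_mem hy _)
  obtain ⟨w, hw, c, hc0, hc1, hyc⟩ := hG.residue m hm hy
  -- `P j = b + L m u`
  obtain ⟨b, u, hu, u', hu', hb1, hb2⟩ := Cong.ev hc j
  -- `L c = b + d` modulo `L m`
  obtain ⟨t, ht⟩ : ∃ t : ℤ, b + d = K.factorial * c + (K.factorial * m : ℕ) * t := by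
    have h1 : (b + d - K.factorial * c) • e
        = ((K.factorial * m : ℕ) : ℤ) • (w - u - z) := by
      rw [hb1, hyc] at hYz
      rw [← sub_eq_zero] at hYz ⊢
      rw [← neg_eq_zero, ← hYz]
      push_cast
      module
    have hmem : w - u - z ∈ Z := Z.sub_mem (Z.sub_mem hw hu) hz
    set D := K.factorial * m with hDdef
    have hD : 0 < D := by positivity
    set k := b + d - K.factorial * c with hk
    refine ⟨k / D, ?_⟩
    -- floor of k / D
    have h2 : (k % D) • e = (D : ℤ) • ((w - u - z) - (k / D) • e) := by
      rw [smul_sub, ← h1, smul_smul, ← sub_smul]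
      congr 1
      have := Int.emod_add_mul_ediv k D
      linarith
    have h3 : 0 ≤ k % D := Int.emod_nonneg _ (by positivity)
    have h4 : k % D < D := Int.emod_lt_of_pos _ (by positivity)
    set v := (w - u - z) - (k / D) • e with hv
    have hvZ : v ∈ Z := Z.sub_mem hmem (Z.zsmul_mem hG.mem _)
    have h5 : v < e := by
      rw [← zsmul_lt_zsmul_iff_right (n := (D : ℤ)) (by positivity), ← h2, hG.smul_lt]
      exact h4
    have h6 : ¬ 0 < v := fun hpos => absurd (hG.least v hvZ hpos) (not_le.2 h5)
    have h7 : k % D ≤ 0 := by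
      by_contra hcon
      push Not at hcon
      have : 0 < (k % D) • e := zsmul_pos hG.pos hcon
      rw [h2] at this
      have h8 : (D : ℤ) • v ≤ 0 := by
        have := zsmul_le_zsmul_right (α := M) (n := (D : ℤ)) (by positivity) (not_lt.1 h6)
        simpa using this
      exact absurd this (not_lt.2 h8)
    have := Int.emod_add_mul_ediv k D
    have : k % D = 0 := le_antisymm h7 h3
    linarith
  refine ⟨c • e' + (m : ℤ) • (u' + t • e'), ?_, ?_, ?_⟩
  · exact Z'.add_mem (Z'.zsmul_mem h'.mem _)
      (Z'.zsmul_mem (Z'.add_mem hu' (Z'.zsmul_mem h'.mem _)) _)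
  · refine E.extend hL (fact_dvd K) (h.mono (by omega)) y _ fun g hg => ?_
    have : (K.factorial : ℤ) • (c • e' + (m : ℤ) • (u' + t • e')) = ev x' j + d • e' := by
      rw [hb2]
      have hd : d = K.factorial * c + (K.factorial * m : ℕ) * t - b := by linarith
      rw [hd]
      push_cast
      module
    rw [this]
    exact hloc g (mem_box.2 hg)
  · exact ⟨c, w, hw, _, Z'.add_mem hu' (Z'.zsmul_mem h'.mem _), by rw [hyc, add_comm], rfl⟩


lemma split_sign (h : GG Z e) {W S : M} (hW : W ∈ Z) (k : ℤ) (h1 : k • e ≤ S)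
    (h2 : S < (k + 1) • e) :
    (0 < W + S ↔ 0 < W + k • e ∨ (W + k • e = 0 ∧ k • e < S)) ∧
    (W + S ∈ Z ↔ ¬ k • e < S) := by
  have hk : W + k • e ∈ Z := Z.add_mem hW (Z.zsmul_mem h.mem _)
  rw [add_smul, one_smul] at h2
  constructor
  · rcases lt_trichotomy (W + k • e) 0 with hlt | heq | hgt
    · have := (h.lt_iff hk Z.zero_mem).1 hlt
      have h3 : W + S < 0 := lt_of_lt_of_le (by rw [add_assoc]; simpa using h2) this
      refine iff_of_false h3.not_gt ?_
      rintro (h4 | h4)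
      · exact h4.not_gt hlt
      · exact hlt.ne h4.1
    · have h3 : W = -(k • e) := eq_neg_of_add_eq_zero_left heq
      constructor
      · intro h4
        refine Or.inr ⟨heq, ?_⟩
        rw [h3] at h4
        simpa using h4
      · rintro (h4 | h4)
        · exact absurd heq h4.ne'
        · rw [h3]; simpa using h4.2
    · exact iff_of_true (lt_of_lt_of_le hgt (by simpa using h1)) (Or.inl hgt)
  · constructor
    · intro hm hlt
      have hS : S ∈ Z := by
        have := Z.sub_mem hm hW
        simpa using this
      exact absurd ((h.lt_iff (Z.zsmul_mem h.mem _) hS).1 hlt) (not_le.2 h2)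
    · intro hn
      have : S = k • e := le_antisymm (not_lt.1 hn) h1
      rw [this]; exact hk

def Rel (Z : AddSubgroup M) (e : M) (Z' : AddSubgroup N) (e' : N) (K m : ℕ) {n : ℕ}
    (xs : Fin n → M) (ys : Fin n → N) : Prop :=
  ∃ (u r : Fin (n+1) → M) (u' r' : Fin (n+1) → N),
    (u 0 = e ∧ r 0 = e ∧ u' 0 = e' ∧ r' 0 = e') ∧
    ((∀ i, u i ∈ Z) ∧ (∀ i, u' i ∈ Z')) ∧
    (E K u u' ∧ E K r r' ∧ ∀ i, Cong Z e Z' e' m (u i) (u' i)) ∧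
    ((∀ i, xs i = u i.succ + r i.succ) ∧ (∀ i, ys i = u' i.succ + r' i.succ)) ∧
    ((∀ i, 0 ≤ r (Fin.succ i) ∧ r (Fin.succ i) < e) ∧
      (∀ i, 0 ≤ r' (Fin.succ i) ∧ r' (Fin.succ i) < e'))

lemma Rel.symm {K m n : ℕ} {xs : Fin n → M} {ys : Fin n → N} (h : Rel Z e Z' e' K m xs ys) :
    Rel Z' e' Z e K m ys xs := by
  obtain ⟨u, r, u', r', ⟨h1, h2, h3, h4⟩, ⟨h5, h6⟩, ⟨h7, h8, h9⟩, ⟨h10, h11⟩, h12, h13⟩ := h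
  exact ⟨u', r', u, r, ⟨h3, h4, h1, h2⟩, ⟨h6, h5⟩, ⟨h7.symm, h8.symm, fun i => (h9 i).symm⟩,
    ⟨h11, h10⟩, h13, h12⟩

lemma Rel.mono {K K' m m' n : ℕ} (hK : K ≤ K') (hm : m ∣ m') {xs : Fin n → M} {ys : Fin n → N}
    (h : Rel Z e Z' e' K' m' xs ys) : Rel Z e Z' e' K m xs ys := by
  obtain ⟨u, r, u', r', h1, h2, ⟨h7, h8, h9⟩, h3⟩ := h
  exact ⟨u, r, u', r', h1, h2, ⟨h7.mono hK, h8.mono hK, fun i => (h9 i).mono hm⟩, h3⟩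

lemma Rel.nil (hG : GG Z e) (h' : GG Z' e') (K m : ℕ) (xs : Fin 0 → M) (ys : Fin 0 → N) :
    Rel Z e Z' e' K m xs ys := by
  have hE : E K (fun _ : Fin 1 => e) (fun _ : Fin 1 => e') := by
    intro a _
    have h1 := hG.smul_lt 0 (a 0)
    have h2 := h'.smul_lt 0 (a 0)
    simp only [zero_smul] at h1 h2
    simp [ev, h1, h2]
  refine ⟨fun _ => e, fun _ => e, fun _ => e', fun _ => e', ⟨rfl, rfl, rfl, rfl⟩,
    ⟨fun _ => hG.mem, fun _ => h'.mem⟩, ⟨hE, hE, fun _ => ?_⟩, ⟨fun i => i.elim0, fun i => i.elim0⟩,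
    fun i => i.elim0, fun i => i.elim0⟩
  exact ⟨1, 0, Z.zero_mem, 0, Z'.zero_mem, by simp, by simp⟩

lemma Rel.forth {K m n : ℕ} (hK : 0 < K) (hm : 0 < m) (hG : GG Z e) (h' : GG Z' e')
    {xs : Fin n → M} {ys : Fin n → N}
    (h : Rel Z e Z' e' (2 * (K.factorial * K) + K.factorial * m) (K.factorial * m) xs ys) (x : M) :
    ∃ y : N, Rel Z e Z' e' K m (Fin.snoc xs x : Fin (n+1) → M) (Fin.snoc ys y : Fin (n+1) → N) := by
  obtain ⟨u, r, u', r', ⟨h1, h2, h3, h4⟩, ⟨h5, h6⟩, ⟨h7, h8, h9⟩, ⟨h10, h11⟩, h12, h13⟩ := h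
  obtain ⟨f, hf, hfx, hxf⟩ := hG.floor x
  obtain ⟨f', hf', hE1, hC⟩ := forth_Z hm le_rfl hG h' h1 h3 h5 h7 h9 f hf
  obtain ⟨g', hE2⟩ := forth_R (K := K) (by omega) h' h8 (x - f)
  have hz : (0 : Fin (n+2)) = Fin.castSucc 0 := rfl
  have hs : ∀ {G : Type _} (v : Fin (n+1) → G) (y : G), (Fin.snoc v y : Fin (n+2) → G) 0 = v 0 := by
    intro G v y
    rw [hz, Fin.snoc_castSucc]
  have hs' : ∀ {G : Type _} (v : Fin (n+1) → G) (y : G), (Fin.snoc v y : Fin (n+2) → G) 0 = v 0 := by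
    intro G v y
    rw [hz, Fin.snoc_castSucc]
  have hK1 : (1 : ℤ) ≤ K := by exact_mod_cast hK
  have hl : Fin.last (n+1) ≠ 0 := (Fin.last_pos).ne'
  have hg0 : 0 ≤ g' := by
    have := hE2 (Pi.single (Fin.last (n+1)) (-1)) (by
      intro i
      rcases eq_or_ne i (Fin.last (n+1)) with rfl | hi
      · simpa using hK1
      · simp [hi])
    rw [ev_single, ev_single, Fin.snoc_last, Fin.snoc_last] at this
    by_contra hc
    push Not at hc
    have h := this.2 (by simpa using hc)
    simp at h
    exact absurd hfx (not_le.2 h)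
  have hg1 : g' < e' := by
    have := hE2.lt (Pi.single (Fin.last (n+1)) 1) (Pi.single 0 1) (by
      intro i
      rcases eq_or_ne i (Fin.last (n+1)) with rfl | hi
      · simpa [hl] using hK1
      · rcases eq_or_ne i 0 with rfl | hi0
        · simpa [hi] using hK1
        · simp [hi, hi0])
    rw [ev_single, ev_single, ev_single, ev_single, Fin.snoc_last, Fin.snoc_last, hs, hs',
      h2, h4] at this
    simp only [one_smul] at this
    exact this.1 (sub_lt_iff_lt_add'.2 hxf)
  refine ⟨f' + g', Fin.snoc u f, Fin.snoc r (x - f), Fin.snoc u' f', Fin.snoc r' g',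
    ⟨by rw [hs, h1], by rw [hs, h2], by rw [hs', h3], by rw [hs', h4]⟩, ⟨?_, ?_⟩,
    ⟨hE1, hE2, ?_⟩, ⟨?_, ?_⟩, ?_, ?_⟩
  · intro i; refine Fin.lastCases ?_ (fun i => ?_) i
    · simpa using hf
    · simpa using h5 i
  · intro i; refine Fin.lastCases ?_ (fun i => ?_) i
    · simpa using hf'
    · simpa using h6 i
  · intro i; refine Fin.lastCases ?_ (fun i => ?_) i
    · simpa using hC
    · simpa using (h9 i).mono (dvd_mul_left _ _)
  · intro i; refine Fin.lastCases ?_ (fun i => ?_) i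
    · simp
    · simp only [Fin.succ_castSucc, Fin.snoc_castSucc]; exact h10 i
  · intro i; refine Fin.lastCases ?_ (fun i => ?_) i
    · simp
    · simp only [Fin.succ_castSucc, Fin.snoc_castSucc]; exact h11 i
  · intro i; refine Fin.lastCases ?_ (fun i => ?_) i
    · simp only [Fin.succ_last, Fin.snoc_last]
      exact ⟨sub_nonneg.2 hfx, sub_lt_iff_lt_add'.2 hxf⟩
    · simp only [Fin.succ_castSucc, Fin.snoc_castSucc]; exact h12 i
  · intro i; refine Fin.lastCases ?_ (fun i => ?_) i
    · simpa using ⟨hg0, hg1⟩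
    · simp only [Fin.succ_castSucc, Fin.snoc_castSucc]; exact h13 i

lemma ev_bound {n : ℕ} (r : Fin n → M) (he : 0 < e) (hr : ∀ i, 0 ≤ r i ∧ r i ≤ e)
    (a : Fin n → ℤ) : |ev r a| ≤ (∑ i, |a i|) • e := by
  unfold ev
  refine (Finset.abs_sum_le_sum_abs _ _).trans ?_
  rw [Finset.sum_smul]
  refine Finset.sum_le_sum fun i _ => ?_
  rw [abs_zsmul, abs_of_nonneg (hr i).1]
  exact zsmul_le_zsmul_right (abs_nonneg _) (hr i).2

lemma ev_split {n : ℕ} (xs : Fin n → M) (u r : Fin (n+1) → M) (hu : u 0 = e)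
    (hx : ∀ i, xs i = u i.succ + r i.succ) (a : Fin (n+1) → ℤ) :
    ev (Fin.cons e xs : Fin (n+1) → M) a = ev u a + ev r (Function.update a 0 0) := by
  simp only [ev, Fin.sum_univ_succ, Fin.cons_zero, Fin.cons_succ, hx, hu, smul_add,
    Finset.sum_add_distrib, Function.update_self, zero_smul, zero_add]
  rw [add_assoc]
  congr 1

lemma atomic (hG : GG Z e) (h' : GG Z' e') {n : ℕ} (a : Fin (n+1) → ℤ) :
    ∃ K : ℕ, ∀ (m : ℕ) (xs : Fin n → M) (ys : Fin n → N), Rel Z e Z' e' K m xs ys →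
      (0 < ev (Fin.cons e xs : Fin (n+1) → M) a ↔ 0 < ev (Fin.cons e' ys : Fin (n+1) → N) a) ∧
      (ev (Fin.cons e xs : Fin (n+1) → M) a ∈ Z ↔ ev (Fin.cons e' ys : Fin (n+1) → N) a ∈ Z') := by
  set a0 : Fin (n+1) → ℤ := Function.update a 0 0 with ha0
  obtain ⟨B, hB⟩ : ∃ B : ℕ, (B : ℤ) = ∑ i, |a0 i| + 1 :=
    ⟨(∑ i, |a0 i| + 1).toNat, Int.toNat_of_nonneg
      (add_nonneg (Finset.sum_nonneg fun _ _ => abs_nonneg _) zero_le_one)⟩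
  obtain ⟨A, hA⟩ : ∃ A : ℕ, ∀ i, |a i| ≤ A := by
    refine ⟨(∑ i, |a i|).toNat, fun i => ?_⟩
    rw [Int.toNat_of_nonneg (Finset.sum_nonneg fun _ _ => abs_nonneg _)]
    exact Finset.single_le_sum (f := fun i => |a i|) (fun _ _ => abs_nonneg _) (Finset.mem_univ i)
  have hA0 : ∀ i, |a0 i| ≤ A := by
    intro i
    rcases eq_or_ne i 0 with rfl | hi
    · simp [ha0]
    · simpa [ha0, hi] using hA i
  refine ⟨A + B + 1, ?_⟩
  rintro m xs ys ⟨u, r, u', r', ⟨h1, h2, h3, h4⟩, ⟨h5, h6⟩, ⟨h7, h8, h9⟩, ⟨h10, h11⟩, h12, h13⟩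
  rw [ev_split xs u r h1 h10, ev_split ys u' r' h3 h11, ← ha0]
  have hb := ev_bound r hG.pos (e := e) (by
    intro i
    refine Fin.cases ?_ (fun i => ?_) i
    · rw [h2]; exact ⟨hG.pos.le, le_rfl⟩
    · exact ⟨(h12 i).1, (h12 i).2.le⟩) a0
  have hb2 : |ev r a0| < (B : ℤ) • e := by
    refine hb.trans_lt ?_
    rw [hG.smul_lt, hB]; omega
  obtain ⟨k, hk1, hk2, hk3⟩ := hG.std_floor' B (ev r a0) (abs_lt.1 hb2).1.le (abs_lt.1 hb2).2
  have hsing : ∀ (l : ℤ) (i : Fin (n+1)), |(Pi.single 0 l : Fin (n+1) → ℤ) i| ≤ |l| := by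
    intro l i
    rcases eq_or_ne i 0 with rfl | hi
    · simp
    · simp [hi]
  have hl1 : |k + 1| ≤ B + 1 := (abs_add_le _ _).trans (by simpa using hk1)
  have hbd : ∀ (c : Fin (n+1) → ℤ), (∀ i, |c i| ≤ A) → ∀ l : ℤ, |l| ≤ B + 1 → ∀ i,
      |c i - (Pi.single 0 l : Fin (n+1) → ℤ) i| ≤ (A + B + 1 : ℕ) := by
    intro c hc l hl i
    have := abs_sub (c i) ((Pi.single 0 l : Fin (n+1) → ℤ) i)
    have := hsing l i
    have := hc i
    push_cast
    linarith
  have hbd' : ∀ (c : Fin (n+1) → ℤ), (∀ i, |c i| ≤ A) → ∀ l : ℤ, |l| ≤ B + 1 → ∀ i,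
      |(Pi.single 0 l : Fin (n+1) → ℤ) i - c i| ≤ (A + B + 1 : ℕ) := by
    intro c hc l hl i
    rw [abs_sub_comm]; exact hbd c hc l hl i
  have c1 : ∀ l : ℤ, |l| ≤ B + 1 → (l • e < ev r a0 ↔ l • e' < ev r' a0) := by
    intro l hl
    have := h8.lt (Pi.single 0 l) a0 (hbd a0 hA0 l hl)
    rwa [ev_single, ev_single, h2, h4] at this
  have c2 : ∀ l : ℤ, |l| ≤ B + 1 → (ev r a0 < l • e ↔ ev r' a0 < l • e') := by
    intro l hl
    have := h8.lt a0 (Pi.single 0 l) (hbd' a0 hA0 l hl)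
    rwa [ev_single, ev_single, h2, h4] at this
  have d1 : 0 < ev u a + k • e ↔ 0 < ev u' a + k • e' := by
    have := h7.lt (Pi.single 0 (-k)) a (hbd a hA _ (by rw [abs_neg]; omega))
    rw [ev_single, ev_single, h1, h3, neg_smul, neg_smul, neg_lt_iff_pos_add,
      neg_lt_iff_pos_add] at this
    exact this
  have d2 : ev u a + k • e < 0 ↔ ev u' a + k • e' < 0 := by
    have := h7.lt a (Pi.single 0 (-k)) (hbd' a hA _ (by rw [abs_neg]; omega))
    rw [ev_single, ev_single, h1, h3, neg_smul, neg_smul, lt_neg_iff_add_neg,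
      lt_neg_iff_add_neg] at this
    exact this
  have d3 : ev u a + k • e = 0 ↔ ev u' a + k • e' = 0 := by
    rw [le_antisymm_iff, le_antisymm_iff, ← not_lt, ← not_lt, ← not_lt, ← not_lt, d1, d2]
  have hk2' : k • e' ≤ ev r' a0 := by
    rw [← not_lt, ← c2 k (by omega), not_lt]; exact hk2
  have hk3' : ev r' a0 < (k + 1) • e' := (c2 _ hl1).1 hk3
  obtain ⟨s1, s2⟩ := split_sign hG (ev_mem Z u h5 a) k hk2 hk3
  obtain ⟨s1', s2'⟩ := split_sign h' (ev_mem Z' u' h6 a) k hk2' hk3'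
  rw [s1, s2, s1', s2', d1, d3, c1 k (by omega)]
  exact ⟨Iff.rfl, Iff.rfl⟩

end two

structure Br (M : Type*) [L2G.Structure M] [AddCommGroup M] [LinearOrder M]
    (Z : AddSubgroup M) : Prop where
  add : ∀ x y : M, L2G.add x y = x + y
  zero : L2G.zero M = 0
  lt : ∀ x y : M, L2G.lt x y ↔ x < y
  inZ : ∀ x : M, L2G.inZ x ↔ x ∈ Z

lemma exists_instances (M : Type*) [L2G.Structure M] (hM : L2G.IsGGStructure M) :
    ∃ (_ : AddCommGroup M) (_ : LinearOrder M) (_ : IsOrderedAddMonoid M) (Z : AddSubgroup M),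
      GG Z (L2G.one M) ∧ Br M Z := by
  classical
  obtain ⟨h1, h2, h3, h4, h5, h6, h7, h8, h9, h10, h11, h12, h13, h14, h15, h16⟩ := hM
  choose ng hng using h4
  letI : Add M := ⟨L2G.add⟩
  letI : Zero M := ⟨L2G.zero M⟩
  letI : Neg M := ⟨ng⟩
  letI i0 : AddCommGroup M :=
    { add_assoc := h1
      zero_add := fun x => (h2 _ _).trans (h3 x)
      add_zero := h3
      neg_add_cancel := fun x => (h2 _ _).trans (hng x)
      add_comm := h2
      nsmul := nsmulRec
      zsmul := zsmulRec }
  letI i1 : LinearOrder M :=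
    { lt := L2G.lt
      le := fun x y => L2G.lt x y ∨ x = y
      le_refl := fun x => Or.inr rfl
      le_trans := by
        rintro x y z (h | rfl) (h' | rfl)
        · exact Or.inl (h6 _ _ _ h h')
        · exact Or.inl h
        · exact Or.inl h'
        · exact Or.inr rfl
      le_antisymm := by
        rintro x y (h | h) (h' | h')
        · exact absurd (h6 _ _ _ h h') (h5 _)
        · exact h'.symm
        · exact h
        · exact h
      lt_iff_le_not_ge := by
        intro x y
        constructor
        · intro h
          refine ⟨Or.inl h, ?_⟩
          rintro (h' | rfl)
          · exact h5 _ (h6 _ _ _ h h')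
          · exact h5 _ h
        · rintro ⟨h | rfl, h'⟩
          · exact h
          · exact absurd (Or.inr rfl) h'
      le_total := by
        intro x y
        rcases h7 x y with h | h | h
        · exact Or.inl (Or.inl h)
        · exact Or.inl (Or.inr h)
        · exact Or.inr (Or.inl h)
      toDecidableLE := Classical.decRel _ }
  have hlt : ∀ x y : M, L2G.lt x y ↔ x < y := fun _ _ => Iff.rfl
  have hadd : ∀ x y : M, L2G.add x y = x + y := fun _ _ => rfl
  have hzero : L2G.zero M = 0 := rfl
  have hns : ∀ (n : ℕ) (x : M), L2G.nsmul n x = n • x := by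
    intro n x
    induction n with
    | zero => rw [zero_nsmul]; rfl
    | succ n ih =>
      rw [succ_nsmul', ← ih]; rfl
  letI i2 : IsOrderedAddMonoid M :=
    { add_le_add_left := by
        rintro x y (h | rfl) z
        · exact Or.inl (h8 _ _ _ h)
        · exact Or.inr rfl }
  simp only [hlt, hadd, hzero, hns] at h8 h9 h10 h11 h12 h14 h15 h16
  refine ⟨i0, i1, i2,
    { carrier := {x | L2G.inZ x}
      add_mem' := fun {x y} hx hy => h11 x y hx hy
      zero_mem' := h10
      neg_mem' := fun {x} hx => h12 x (-x) hx (add_neg_cancel x) }, ⟨h9, h13, h14, ?_, ?_⟩,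
      ⟨hadd, hzero, hlt, fun _ => Iff.rfl⟩⟩
  · intro x hx h0
    exact not_lt.1 (h15 x hx h0)
  · intro x
    obtain ⟨n, hn, ha, hb⟩ := h16 x
    exact ⟨n, hn, not_lt.1 ha, hb⟩

section final
variable {M : Type*} [AddCommGroup M] [LinearOrder M] [IsOrderedAddMonoid M]
  {Z : AddSubgroup M} [L2G.Structure M]
  {N : Type*} [AddCommGroup N] [LinearOrder N] [IsOrderedAddMonoid N]
  {Z' : AddSubgroup N} [L2G.Structure N]

open FirstOrder Language

lemma term_ev (bM : Br M Z) (bN : Br N Z') {n : ℕ} (t : L2G.Term (Empty ⊕ Fin n)) :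
    ∃ a : Fin (n+1) → ℤ,
      (∀ (v : Empty → M) (xs : Fin n → M),
        t.realize (Sum.elim v xs) = ev (Fin.cons (L2G.one M) xs : Fin (n+1) → M) a) ∧
      (∀ (v : Empty → N) (xs : Fin n → N),
        t.realize (Sum.elim v xs) = ev (Fin.cons (L2G.one N) xs : Fin (n+1) → N) a) := by
  induction t with
  | var i =>
    rcases i with i | i
    · exact i.elim
    · refine ⟨Pi.single i.succ 1, fun v xs => ?_, fun v xs => ?_⟩ <;> simp [ev_single]
  | @func l f ts ih =>
    match l, f, ts, ih with
    | 0, f, ts, ih =>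
      have hf : f = L2G.zeroSym ∨ f = L2G.oneSym := by
        have : ∀ g : Fin 2, g = 0 ∨ g = 1 := by decide
        exact this f
      rcases hf with rfl | rfl
      · refine ⟨0, fun v xs => ?_, fun v xs => ?_⟩
        · rw [Term.realize_func]
          refine Eq.trans ?_ (bM.zero.trans (by simp [ev]))
          exact congrArg _ (Subsingleton.elim _ _)
        · rw [Term.realize_func]
          refine Eq.trans ?_ (bN.zero.trans (by simp [ev]))
          exact congrArg _ (Subsingleton.elim _ _)
      · refine ⟨Pi.single 0 1, fun v xs => ?_, fun v xs => ?_⟩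
        · rw [Term.realize_func, ev_single, one_smul, Fin.cons_zero]
          exact congrArg _ (Subsingleton.elim _ _)
        · rw [Term.realize_func, ev_single, one_smul, Fin.cons_zero]
          exact congrArg _ (Subsingleton.elim _ _)
    | 1, f, ts, ih => exact Empty.elim f
    | 2, f, ts, ih =>
      obtain ⟨a, ha, ha'⟩ := ih 0
      obtain ⟨b, hb, hb'⟩ := ih 1
      refine ⟨a + b, fun v xs => ?_, fun v xs => ?_⟩
      · rw [Term.realize_func, ev_add, ← ha v, ← hb v, ← bM.add]
        refine congrArg _ ?_
        ext i; fin_cases i <;> rfl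
      · rw [Term.realize_func, ev_add, ← ha' v, ← hb' v, ← bN.add]
        refine congrArg _ ?_
        ext i; fin_cases i <;> rfl
    | (k + 3), f, ts, ih => exact Empty.elim f

lemma main (hG : GG Z (L2G.one M)) (h' : GG Z' (L2G.one N)) (bM : Br M Z) (bN : Br N Z') {n : ℕ}
    (φ : L2G.BoundedFormula Empty n) :
    ∃ K m : ℕ, 0 < K ∧ 0 < m ∧ ∀ (v : Empty → M) (w : Empty → N) (xs : Fin n → M) (ys : Fin n → N),
      Rel Z (L2G.one M) Z' (L2G.one N) K m xs ys → (φ.Realize v xs ↔ φ.Realize w ys) := by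
  induction φ with
  | falsum => exact ⟨1, 1, one_pos, one_pos, fun _ _ _ _ _ => Iff.rfl⟩
  | equal t₁ t₂ =>
    obtain ⟨a, ha, ha'⟩ := term_ev bM bN t₁
    obtain ⟨b, hb, hb'⟩ := term_ev bM bN t₂
    obtain ⟨K1, hK1⟩ := atomic hG h' (a - b)
    obtain ⟨K2, hK2⟩ := atomic hG h' (b - a)
    refine ⟨K1 + K2 + 1, 1, by omega, one_pos, fun v w xs ys hR => ?_⟩
    have r1 := (hK1 1 xs ys (hR.mono (by omega) dvd_rfl)).1
    have r2 := (hK2 1 xs ys (hR.mono (by omega) dvd_rfl)).1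
    rw [ev_sub, ev_sub, sub_pos, sub_pos] at r1 r2
    change t₁.realize _ = t₂.realize _ ↔ t₁.realize _ = t₂.realize _
    rw [ha, hb, ha', hb', le_antisymm_iff, le_antisymm_iff, ← not_lt, ← not_lt, ← not_lt,
      ← not_lt, r1, r2]
  | @rel n l R ts =>
    match l, R, ts with
    | 0, R, ts => exact Empty.elim R
    | 1, R, ts =>
      obtain ⟨a, ha, ha'⟩ := term_ev bM bN (ts 0)
      obtain ⟨K1, hK1⟩ := atomic hG h' a
      refine ⟨K1 + 1, 1, by omega, one_pos, fun v w xs ys hR => ?_⟩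
      have r1 := (hK1 1 xs ys (hR.mono (by omega) dvd_rfl)).2
      rw [← ha v, ← ha' w, ← bM.inZ, ← bN.inZ] at r1
      obtain rfl : R = L2G.zSym := rfl
      change Structure.RelMap L2G.zSym (fun i => (ts i).realize (Sum.elim v xs)) ↔
        Structure.RelMap L2G.zSym (fun i => (ts i).realize (Sum.elim w ys))
      unfold L2G.inZ at r1
      convert r1 using 2
      · ext i; fin_cases i; rfl
      · ext i; fin_cases i; rfl
    | 2, R, ts =>
      obtain ⟨a, ha, ha'⟩ := term_ev bM bN (ts 0)
      obtain ⟨b, hb, hb'⟩ := term_ev bM bN (ts 1)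
      obtain ⟨K1, hK1⟩ := atomic hG h' (b - a)
      refine ⟨K1 + 1, 1, by omega, one_pos, fun v w xs ys hR => ?_⟩
      have r1 := (hK1 1 xs ys (hR.mono (by omega) dvd_rfl)).1
      rw [ev_sub, ev_sub, sub_pos, sub_pos, ← ha v, ← ha' w, ← hb v, ← hb' w, ← bM.lt,
        ← bN.lt] at r1
      obtain rfl : R = L2G.ltSym := rfl
      change Structure.RelMap L2G.ltSym (fun i => (ts i).realize (Sum.elim v xs)) ↔
        Structure.RelMap L2G.ltSym (fun i => (ts i).realize (Sum.elim w ys))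
      unfold L2G.lt at r1
      convert r1 using 2
      · ext i; fin_cases i <;> rfl
      · ext i; fin_cases i <;> rfl
    | (k + 3), R, ts => exact Empty.elim R
  | imp f g ihf ihg =>
    obtain ⟨K1, m1, hK1, hm1, H1⟩ := ihf
    obtain ⟨K2, m2, hK2, hm2, H2⟩ := ihg
    refine ⟨K1 + K2, m1 * m2, by omega, by positivity, fun v w xs ys hR => ?_⟩
    rw [BoundedFormula.realize_imp, BoundedFormula.realize_imp,
      H1 v w xs ys (hR.mono (by omega) (dvd_mul_right _ _)),
      H2 v w xs ys (hR.mono (by omega) (dvd_mul_left _ _))]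
  | all f ih =>
    obtain ⟨K, m, hK, hm, H⟩ := ih
    have := K.factorial_pos
    refine ⟨2 * (K.factorial * K) + K.factorial * m, K.factorial * m, by positivity, by positivity,
      fun v w xs ys hR => ?_⟩
    rw [BoundedFormula.realize_all, BoundedFormula.realize_all]
    constructor
    · intro hx y
      obtain ⟨x, hx'⟩ := Rel.forth hK hm h' hG hR.symm y
      exact (H v w _ _ hx'.symm).1 (hx x)
    · intro hy x
      obtain ⟨y, hy'⟩ := Rel.forth hK hm hG h' hR x
      exact (H v w _ _ hy').2 (hy y)

end final
end GGproof

theorem stmt_13 (M N : Type*) [L2G.Structure M] [L2G.Structure N]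
    (hM : L2G.IsGGStructure M) (hN : L2G.IsGGStructure N) :
    L2G.ElementarilyEquivalent M N := by
  obtain ⟨_, _, _, Z, gM, bM⟩ := GGproof.exists_instances M hM
  obtain ⟨_, _, _, Z', gN, bN⟩ := GGproof.exists_instances N hN
  rw [Language.elementarilyEquivalent_iff]
  intro φ
  obtain ⟨K, m, _, _, H⟩ := GGproof.main gM gN bM bN φ
  exact H _ _ _ _ (GGproof.Rel.nil gM gN K m _ _)
end

section
/- Let L_3G be the first-order language with a binary function symbol +, constant symbols 0 and 1, a binary relation symbol <, and unary relation symbols Z and L. Call an L_3G-structure a model of GGG if: its universe with +, 0, < is a divisible ordered abelian group; the set defined by Z is an integer part whose least positive element equals the interpretation of 1; and the set defined by L is a convex subgroup containing the interpretation of 1. Let M and N be models of GGG such that L defines the whole universe in M if and only if L defines the whole universe in N. Then M and N are elementarily equivalent. In other words, the only completions of the theory GGG are GGG + (Q = L) and GGG + (Q ≠ L). -/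
open FirstOrder

/-- The language `L_3G` with constants `0`, `1`, a binary function `+`, unary relations `Z`
and `L`, and a binary relation `<`. -/
def L3G : FirstOrder.Language where
  Functions n := match n with
    | 0 => Fin 2
    | 2 => Unit
    | _ => Empty
  Relations n := match n with
    | 1 => Fin 2
    | 2 => Unit
    | _ => Empty

namespace L3G

def zeroSym : L3G.Functions 0 := (0 : Fin 2)
def oneSym : L3G.Functions 0 := (1 : Fin 2)
def addSym : L3G.Functions 2 := Unit.unit
def zSym : L3G.Relations 1 := (0 : Fin 2)
def lSym : L3G.Relations 1 := (1 : Fin 2)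
def ltSym : L3G.Relations 2 := Unit.unit

variable {M : Type*} [L3G.Structure M]

/-- The interpretation of `+` in an `L3G`-structure. -/
def add (x y : M) : M := Language.Structure.funMap addSym ![x, y]

/-- The interpretation of `0` in an `L3G`-structure. -/
def zero (M : Type*) [L3G.Structure M] : M := Language.Structure.funMap zeroSym ![]

/-- The interpretation of `1` in an `L3G`-structure. -/
def one (M : Type*) [L3G.Structure M] : M := Language.Structure.funMap oneSym ![]

/-- The interpretation of `<` in an `L3G`-structure. -/
def lt (x y : M) : Prop := Language.Structure.RelMap ltSym ![x, y]

/-- The interpretation of `Z` in an `L3G`-structure. -/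
def inZ (x : M) : Prop := Language.Structure.RelMap zSym ![x]

/-- The interpretation of `L` in an `L3G`-structure. -/
def inL (x : M) : Prop := Language.Structure.RelMap lSym ![x]

/-- `n`-fold sum `x + ⋯ + x` in an `L3G`-structure. -/
def nsmul : ℕ → M → M
  | 0, _ => zero M
  | n + 1, x => add x (nsmul n x)

/-- An `L3G`-structure is a model of `GGG` if its universe with `+`, `0`, `<` is a divisible
ordered abelian group, `Z` defines an integer part whose least positive element is `1`, and
`L` defines a convex subgroup containing `1`. -/
def IsGGGStructure (M : Type*) [L3G.Structure M] : Prop :=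
  -- abelian group
  (∀ x y z : M, add (add x y) z = add x (add y z)) ∧
  (∀ x y : M, add x y = add y x) ∧
  (∀ x : M, add x (zero M) = x) ∧
  (∀ x : M, ∃ y : M, add x y = zero M) ∧
  -- linear order
  (∀ x : M, ¬ lt x x) ∧
  (∀ x y z : M, lt x y → lt y z → lt x z) ∧
  (∀ x y : M, lt x y ∨ x = y ∨ lt y x) ∧
  -- compatibility of the order with addition
  (∀ x y z : M, lt x y → lt (add x z) (add y z)) ∧
  -- divisibility
  (∀ (x : M) (n : ℕ), 0 < n → ∃ y : M, nsmul n y = x) ∧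
  -- Z defines a subgroup
  inZ (zero M) ∧
  (∀ x y : M, inZ x → inZ y → inZ (add x y)) ∧
  (∀ x y : M, inZ x → add x y = zero M → inZ y) ∧
  -- 1 is the least positive element of Z
  inZ (one M) ∧ lt (zero M) (one M) ∧
  (∀ x : M, inZ x → lt (zero M) x → ¬ lt x (one M)) ∧
  -- Z is an integer part
  (∀ x : M, ∃ n : M, inZ n ∧ ¬ lt x n ∧ lt x (add n (one M))) ∧
  -- L defines a subgroup
  inL (zero M) ∧
  (∀ x y : M, inL x → inL y → inL (add x y)) ∧
  (∀ x y : M, inL x → add x y = zero M → inL y) ∧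
  -- L is convex
  (∀ x y z : M, inL x → inL y → ¬ lt z x → ¬ lt y z → inL z) ∧
  -- 1 ∈ L
  inL (one M)

end L3G


namespace GGGProof

/-- Abstract version of a model of GGG. -/
class GGG (Q : Type*) [AddCommGroup Q] [LinearOrder Q] [IsOrderedAddMonoid Q] [Module ℚ Q] where
  e : Q
  Z : AddSubgroup Q
  L : AddSubgroup Q
  e_pos : 0 < e
  e_memZ : e ∈ Z
  least : ∀ x ∈ Z, 0 < x → e ≤ x
  floor : ∀ x : Q, ∃ n ∈ Z, n ≤ x ∧ x < n + e
  convex : ∀ x ∈ L, ∀ y, 0 ≤ y → y ≤ x → y ∈ L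
  e_memL : e ∈ L

open GGG

section basics
variable {Q : Type*} [AddCommGroup Q] [LinearOrder Q] [IsOrderedAddMonoid Q] [Module ℚ Q]

instance : PosSMulStrictMono ℚ Q where
  smul_lt_smul_of_pos_left q hq a b hab := by
    by_contra h
    rw [not_lt] at h
    have h1 : q.den • (q • b) ≤ q.den • (q • a) := nsmul_le_nsmul_right h _
    have h2 : ∀ x : Q, q.den • (q • x) = q.num.toNat • x := by
      intro x
      rw [← Nat.cast_smul_eq_nsmul ℚ, ← Nat.cast_smul_eq_nsmul ℚ, smul_smul]
      congr 1
      have : (0 : ℤ) ≤ q.num := (Rat.num_pos.2 hq).le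
      have h3 : ((q.num.toNat : ℤ) : ℚ) = q.num := by rw [Int.toNat_of_nonneg this]
      rw [← Rat.den_mul_eq_num] at h3
      exact_mod_cast h3.symm
    rw [h2, h2] at h1
    have : q.num.toNat ≠ 0 := by
      have := (Rat.num_pos.2 hq); omega
    exact absurd h1 (not_le.2 (nsmul_lt_nsmul_right this hab))

variable [GGG Q]

theorem L_abs {x y : Q} (hx : x ∈ L (Q := Q)) (h : |y| ≤ |x|) : y ∈ L (Q := Q) := by
  have hx' : |x| ∈ L (Q := Q) := by
    rcases abs_choice x with h | h <;> rw [h]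
    · exact hx
    · exact neg_mem hx
  have := convex _ hx' _ (abs_nonneg y) h
  rcases abs_choice y with h | h <;> rw [h] at this
  · exact this
  · simpa using neg_mem this

theorem L_smul {x : Q} (q : ℚ) (hx : x ∈ L (Q := Q)) : q • x ∈ L (Q := Q) := by
  obtain ⟨n, hn⟩ := exists_nat_ge |q|
  refine L_abs (nsmul_mem hx n) ?_
  rw [abs_smul, ← Nat.cast_smul_eq_nsmul ℚ, abs_smul]
  exact smul_le_smul_of_nonneg_right (hn.trans (le_abs_self _)) (abs_nonneg _)

theorem L_smul_iff {x : Q} {q : ℚ} (hq : q ≠ 0) : q • x ∈ L (Q := Q) ↔ x ∈ L (Q := Q) := by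
  refine ⟨fun h => ?_, L_smul q⟩
  have := L_smul q⁻¹ h
  rwa [inv_smul_smul₀ hq] at this

theorem Z_bdd {x : Q} (hx : x ∈ Z (Q := Q)) (n : ℕ) (h : |x| ≤ n • (e : Q)) :
    ∃ k : ℤ, |k| ≤ n ∧ x = (k : ℚ) • (e : Q) := by
  induction n generalizing x with
  | zero =>
    simp only [zero_smul, abs_nonpos_iff] at h
    exact ⟨0, by simp, by simp [h]⟩
  | succ n ih =>
    rcases lt_trichotomy x 0 with h0 | h0 | h0
    · have h1 : e ≤ -x := least _ (neg_mem hx) (by simpa using h0)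
      obtain ⟨k, hk, hk'⟩ := ih (add_mem hx e_memZ) (by
        rw [abs_le] at h ⊢
        rw [succ_nsmul] at h
        have : 0 ≤ n • (e : Q) := nsmul_nonneg e_pos.le n
        constructor <;> grind)
      refine ⟨k - 1, by grind, ?_⟩
      rw [eq_sub_of_add_eq hk']; push_cast; module
    · exact ⟨0, by simp; omega, by simp [h0]⟩
    · have h1 : e ≤ x := least _ hx h0
      obtain ⟨k, hk, hk'⟩ := ih (sub_mem hx e_memZ) (by
        rw [abs_le] at h ⊢
        rw [succ_nsmul] at h
        have : 0 ≤ n • (e : Q) := nsmul_nonneg e_pos.le n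
        constructor <;> grind)
      refine ⟨k + 1, by grind, ?_⟩
      rw [sub_eq_iff_eq_add.1 hk']; push_cast; module

theorem int_smul_Z {x : Q} (hx : x ∈ Z (Q := Q)) (k : ℤ) : (k : ℚ) • x ∈ Z (Q := Q) := by
  rw [Int.cast_smul_eq_zsmul]; exact zsmul_mem hx k

end basics

/-- `a` and `b` have the same sign. -/
def SameSign {A B : Type*} [Zero A] [LT A] [Zero B] [LT B] (a : A) (b : B) : Prop :=
  (0 < a ↔ 0 < b) ∧ (a < 0 ↔ b < 0)

section two
variable {M N : Type*}
  [AddCommGroup M] [LinearOrder M] [IsOrderedAddMonoid M] [Module ℚ M]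
  [AddCommGroup N] [LinearOrder N] [IsOrderedAddMonoid N] [Module ℚ N]

theorem SameSign.eq_zero {a : M} {b : N} (h : SameSign a b) : a = 0 ↔ b = 0 := by
  obtain ⟨h1, h2⟩ := h
  grind

theorem SameSign.symm {a : M} {b : N} (h : SameSign a b) : SameSign b a := ⟨h.1.symm, h.2.symm⟩

theorem SameSign.neg {a : M} {b : N} (h : SameSign a b) : SameSign (-a) (-b) := by
  obtain ⟨h1, h2⟩ := h
  simp [SameSign, h1, h2]

theorem SameSign.smul {a : M} {b : N} (h : SameSign a b) (q : ℚ) : SameSign (q • a) (q • b) := by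
  have key : ∀ p : ℚ, 0 < p → SameSign (p • a) (p • b) := by
    intro p hp
    obtain ⟨h1, h2⟩ := h
    constructor
    · rw [smul_pos_iff_of_pos_left hp, smul_pos_iff_of_pos_left hp, h1]
    · rw [smul_neg_iff_of_pos_left hp, smul_neg_iff_of_pos_left hp, h2]
  rcases lt_trichotomy q 0 with hq | hq | hq
  · have := (key (-q) (by linarith)).neg
    simpa using this
  · subst hq; simp [SameSign]
  · exact key q hq

variable [GGG M] [GGG N]

theorem extend {ι : Type*} (J : Finset ι) (u : ι → M) (v : ι → N)
    (hs : ∀ i ∈ J, ∀ j ∈ J, SameSign (u i - u j) (v i - v j))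
    (hL : ∀ i ∈ J, ∀ j ∈ J, (u i - u j ∈ L (Q := M) ↔ v i - v j ∈ L (Q := N)))
    (hQ : (∀ x : M, x ∈ L (Q := M)) ↔ (∀ x : N, x ∈ L (Q := N))) (x : M) :
    ∃ y : N, ∀ i ∈ J, SameSign (x - u i) (y - v i) ∧
      (x - u i ∈ L (Q := M) ↔ y - v i ∈ L (Q := N)) := by
  classical
  by_cases hex : ∃ i ∈ J, x = u i
  · obtain ⟨i, hi, rfl⟩ := hex
    exact ⟨v i, fun j hj => ⟨hs i hi j hj, hL i hi j hj⟩⟩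
  push Not at hex
  have lt_iff : ∀ i ∈ J, ∀ j ∈ J, (u i < u j ↔ v i < v j) := by
    intro i hi j hj
    have := (hs i hi j hj).2
    rwa [sub_neg, sub_neg] at this
  have le_iff : ∀ i ∈ J, ∀ j ∈ J, (u i ≤ u j ↔ v i ≤ v j) := by
    intro i hi j hj
    rw [← not_lt, ← not_lt, lt_iff j hj i hi]
  suffices h : ∃ y : N, ∀ i ∈ J, (u i < x → v i < y) ∧ (x < u i → y < v i) ∧
      (x - u i ∈ L (Q := M) ↔ y - v i ∈ L (Q := N)) by
    obtain ⟨y, hy⟩ := h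
    refine ⟨y, fun i hi => ⟨?_, (hy i hi).2.2⟩⟩
    obtain ⟨h1, h2, -⟩ := hy i hi
    have := hex i hi
    constructor
    · rw [sub_pos, sub_pos]
      refine ⟨h1, fun h => ?_⟩
      by_contra h'
      exact lt_asymm h (h2 (lt_of_le_of_ne (not_lt.1 h') this))
    · rw [sub_neg, sub_neg]
      refine ⟨h2, fun h => ?_⟩
      by_contra h'
      exact lt_asymm h (h1 (lt_of_le_of_ne (not_lt.1 h') (Ne.symm this)))
  have : Nontrivial N := ⟨⟨0, e, e_pos.ne⟩⟩
  have : DenselyOrdered N := ⟨fun a b hab => ⟨(1/2 : ℚ) • (a + b), by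
      have : a = (1/2 : ℚ) • (a + a) := by module
      conv_lhs => rw [this]
      exact smul_lt_smul_of_pos_left (by gcongr) (by norm_num), by
      have : b = (1/2 : ℚ) • (b + b) := by module
      conv_rhs => rw [this]
      exact smul_lt_smul_of_pos_left (by gcongr) (by norm_num)⟩⟩
  have transfer : ∀ y : N, ∀ j ∈ J, x - u j ∈ L (Q := M) → y - v j ∈ L (Q := N) →
      ∀ i ∈ J, (x - u i ∈ L (Q := M) ↔ y - v i ∈ L (Q := N)) := by
    intro y j hj hx hy i hi
    have e1 : x - u i = (x - u j) + (u j - u i) := by abel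
    have e2 : y - v i = (y - v j) + (v j - v i) := by abel
    rw [e1, e2, add_mem_cancel_left hx, add_mem_cancel_left hy, hL j hj i hi]
  set lo := J.filter (fun i => u i < x) with hlo
  set hi := J.filter (fun i => x < u i) with hhi
  have lohi : ∀ i ∈ lo, ∀ j ∈ hi, v i < v j := by
    intro i h1 j h2
    rw [hlo, Finset.mem_filter] at h1
    rw [hhi, Finset.mem_filter] at h2
    exact (lt_iff i h1.1 j h2.1).1 (h1.2.trans h2.2)
  have memlo : ∀ i ∈ J, u i < x → i ∈ lo := fun i h h' => Finset.mem_filter.2 ⟨h, h'⟩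
  have memhi : ∀ i ∈ J, x < u i → i ∈ hi := fun i h h' => Finset.mem_filter.2 ⟨h, h'⟩
  have loJ : ∀ i ∈ lo, i ∈ J ∧ u i < x := fun i h => Finset.mem_filter.1 h
  have hiJ : ∀ i ∈ hi, i ∈ J ∧ x < u i := fun i h => Finset.mem_filter.1 h
  by_cases hl : ∃ i ∈ lo, x - u i ∈ L (Q := M)
  · obtain ⟨i0, hi0, hi0L⟩ := hl
    obtain ⟨j, hj, hjmax⟩ := Finset.exists_max_image lo v ⟨i0, hi0⟩
    obtain ⟨hjJ, hjx⟩ := loJ j hj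
    have hjL : x - u j ∈ L (Q := M) := by
      refine convex _ hi0L _ (sub_nonneg.2 hjx.le) ?_
      have := (le_iff i0 (loJ i0 hi0).1 j hjJ).2 (hjmax i0 hi0)
      gcongr
    obtain ⟨y, hy1, hy2⟩ := Order.exists_between_finsets {v j} (insert (v j + e) (hi.image v)) (by
      intro a ha b hb
      rw [Finset.mem_singleton] at ha
      subst ha
      rcases Finset.mem_insert.1 hb with rfl | hb
      · simpa using e_pos
      · obtain ⟨k, hk, rfl⟩ := Finset.mem_image.1 hb
        exact lohi j hj k hk)
    have hy3 : v j < y := hy1 _ (by simp)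
    have hyL : y - v j ∈ L (Q := N) := by
      refine convex _ e_memL _ (sub_nonneg.2 hy3.le) ?_
      have := hy2 (v j + e) (by simp)
      grind
    refine ⟨y, fun i hi => ⟨fun h => (hjmax i (memlo i hi h)).trans_lt hy3, fun h => hy2 _ ?_,
      transfer y j hjJ hjL hyL i hi⟩⟩
    exact Finset.mem_insert_of_mem (Finset.mem_image_of_mem _ (memhi i hi h))
  by_cases hr : ∃ i ∈ hi, x - u i ∈ L (Q := M)
  · obtain ⟨i0, hi0, hi0L⟩ := hr
    obtain ⟨j, hj, hjmin⟩ := Finset.exists_min_image hi v ⟨i0, hi0⟩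
    obtain ⟨hjJ, hjx⟩ := hiJ j hj
    have hjL : x - u j ∈ L (Q := M) := by
      have := (le_iff j hjJ i0 (hiJ i0 hi0).1).2 (hjmin i0 hi0)
      have h3 : u j - x ∈ L (Q := M) :=
        convex (u i0 - x) (by simpa using neg_mem hi0L) _ (sub_nonneg.2 hjx.le) (by gcongr)
      simpa using neg_mem h3
    obtain ⟨y, hy1, hy2⟩ := Order.exists_between_finsets (insert (v j - e) (lo.image v)) {v j} (by
      intro b hb a ha
      rw [Finset.mem_singleton] at ha
      subst ha
      rcases Finset.mem_insert.1 hb with rfl | hb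
      · simpa using e_pos
      · obtain ⟨k, hk, rfl⟩ := Finset.mem_image.1 hb
        exact lohi k hk j hj)
    have hy3 : y < v j := hy2 _ (by simp)
    have hyL : y - v j ∈ L (Q := N) := by
      have h3 : v j - y ∈ L (Q := N) := by
        refine convex _ e_memL _ (sub_nonneg.2 hy3.le) ?_
        have := hy1 (v j - e) (by simp)
        grind
      simpa using neg_mem h3
    refine ⟨y, fun i hi => ⟨fun h => hy1 _ ?_, fun h => hy3.trans_le (hjmin i (memhi i hi h)),
      transfer y j hjJ hjL hyL i hi⟩⟩
    exact Finset.mem_insert_of_mem (Finset.mem_image_of_mem _ (memlo i hi h))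
  push Not at hl hr
  have hfar : ∀ i ∈ J, x - u i ∉ L (Q := M) := by
    intro i hi
    rcases lt_or_gt_of_ne (hex i hi) with h | h
    · exact hr i (memhi i hi h)
    · exact hl i (memlo i hi h)
  suffices h : ∃ y : N, (∀ i ∈ lo, v i < y ∧ y - v i ∉ L (Q := N)) ∧
      (∀ i ∈ hi, y < v i ∧ y - v i ∉ L (Q := N)) by
    obtain ⟨y, hy1, hy2⟩ := h
    refine ⟨y, fun i hi => ⟨fun h => (hy1 i (memlo i hi h)).1, fun h => (hy2 i (memhi i hi h)).1,
      iff_of_false (hfar i hi) ?_⟩⟩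
    rcases lt_or_gt_of_ne (hex i hi) with h | h
    · exact (hy2 i (memhi i hi h)).2
    · exact (hy1 i (memlo i hi h)).2
  rcases J.eq_empty_or_nonempty with hJ | ⟨i0, hi0⟩
  · refine ⟨0, ?_, ?_⟩ <;> simp [hlo, hhi, hJ]
  have hQ' : ∃ d : N, 0 < d ∧ d ∉ L (Q := N) := by
    have h1 : ¬ ∀ x : M, x ∈ L (Q := M) := fun h => hfar i0 hi0 (h _)
    rw [hQ] at h1
    push Not at h1
    obtain ⟨d, hd⟩ := h1
    refine ⟨|d|, abs_pos.2 ?_, fun h => hd (L_abs h (by simp))⟩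
    rintro rfl
    exact hd (zero_mem _)
  obtain ⟨d, hd, hdL⟩ := hQ'
  have lo_of : ∀ j ∈ lo, (∀ i ∈ lo, v i ≤ v j) → ∀ y : N, v j < y → y - v j ∉ L (Q := N) →
      ∀ i ∈ lo, v i < y ∧ y - v i ∉ L (Q := N) := by
    intro j hj hmax y hy hyL i hi
    refine ⟨(hmax i hi).trans_lt hy, fun h => hyL ?_⟩
    refine convex _ h _ (sub_nonneg.2 hy.le) ?_
    have := hmax i hi
    gcongr
  have hi_of : ∀ j ∈ hi, (∀ i ∈ hi, v j ≤ v i) → ∀ y : N, y < v j → y - v j ∉ L (Q := N) →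
      ∀ i ∈ hi, y < v i ∧ y - v i ∉ L (Q := N) := by
    intro j hj hmin y hy hyL i hi
    refine ⟨hy.trans_le (hmin i hi), fun h => hyL ?_⟩
    have h3 : v j - y ∈ L (Q := N) := by
      refine convex (v i - y) (by simpa using neg_mem h) _ (sub_nonneg.2 hy.le) ?_
      have := hmin i hi
      gcongr
    simpa using neg_mem h3
  rcases lo.eq_empty_or_nonempty with h1 | h1
  · rcases hi.eq_empty_or_nonempty with h2 | h2
    · exact ⟨0, by simp [h1], by simp [h2]⟩
    · obtain ⟨j, hj, hjmin⟩ := Finset.exists_min_image hi v h2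
      refine ⟨v j - d, by simp [h1], hi_of j hj hjmin _ (by simpa using hd) ?_⟩
      intro h
      apply hdL
      simpa using h
  · obtain ⟨j, hj, hjmax⟩ := Finset.exists_max_image lo v h1
    rcases hi.eq_empty_or_nonempty with h2 | h2
    · refine ⟨v j + d, lo_of j hj hjmax _ (by simpa using hd) ?_, by simp [h2]⟩
      simpa using hdL
    · obtain ⟨k, hk, hkmin⟩ := Finset.exists_min_image hi v h2
      have hjk := lohi j hj k hk
      have hjkL : v k - v j ∉ L (Q := N) := by
        rw [← hL k (hiJ k hk).1 j (loJ j hj).1]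
        intro h
        refine hl j hj (convex _ h _ (sub_nonneg.2 (loJ j hj).2.le) ?_)
        have := (hiJ k hk).2.le
        gcongr
      have e1 : v j + (1/2 : ℚ) • (v k - v j) - v j = (1/2 : ℚ) • (v k - v j) := by module
      have e2 : v j + (1/2 : ℚ) • (v k - v j) - v k = (-1/2 : ℚ) • (v k - v j) := by module
      have hpos : 0 < (1/2 : ℚ) • (v k - v j) := smul_pos (by norm_num) (sub_pos.2 hjk)
      refine ⟨v j + (1/2 : ℚ) • (v k - v j), lo_of j hj hjmax _ (by simpa using hjk) ?_,
        hi_of k hk hkmin _ ?_ ?_⟩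
      · rw [e1, L_smul_iff (by norm_num)]; exact hjkL
      · rw [← sub_neg, e2, ← neg_pos, ← neg_smul]
        convert hpos using 2
        norm_num
      · rw [e2, L_smul_iff (by norm_num)]; exact hjkL

end two

/-- Rational affine forms in `n` variables. -/
abbrev Form (n : ℕ) := (Fin n → ℚ) × ℚ

namespace Form
variable {n : ℕ}

/-- forget the last variable -/
def front (c : Form (n + 1)) : Form n := (fun i => c.1 i.castSucc, c.2)

/-- coefficient of the last variable -/
def last (c : Form (n + 1)) : ℚ := c.1 (Fin.last n)

/-- solve for the last variable -/
def root (c : Form (n + 1)) : Form n := -(c.last⁻¹ • c.front)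

/-- substitute for the last variable -/
def subst (c : Form (n + 1)) (t : Form n) : Form n := c.front + c.last • t

/-- constant form -/
def const (n : ℕ) (q : ℚ) : Form n := (0, q)

end Form

section ev
variable {Q : Type*} [AddCommGroup Q] [LinearOrder Q] [IsOrderedAddMonoid Q] [Module ℚ Q] [GGG Q]
variable {n : ℕ}

/-- evaluation of an affine form -/
def ev (c : Form n) (x : Fin n → Q) : Q := ∑ i, c.1 i • x i + c.2 • (e : Q)

theorem ev_add (c d : Form n) (x : Fin n → Q) : ev (c + d) x = ev c x + ev d x := by
  simp only [ev, Prod.fst_add, Prod.snd_add, Pi.add_apply, add_smul, Finset.sum_add_distrib]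
  abel

theorem ev_smul (q : ℚ) (c : Form n) (x : Fin n → Q) : ev (q • c) x = q • ev c x := by
  simp only [ev, Prod.smul_fst, Prod.smul_snd, Pi.smul_apply, smul_add, Finset.smul_sum,
    smul_smul, smul_eq_mul]

theorem ev_neg (c : Form n) (x : Fin n → Q) : ev (-c) x = - ev c x := by
  have := ev_smul (-1) c x
  simpa using this

theorem ev_sub (c d : Form n) (x : Fin n → Q) : ev (c - d) x = ev c x - ev d x := by
  rw [sub_eq_add_neg, ev_add, ev_neg, sub_eq_add_neg]

theorem ev_const (q : ℚ) (x : Fin n → Q) : ev (Form.const n q) x = q • (e : Q) := by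
  simp [ev, Form.const]

theorem ev_snoc (c : Form (n + 1)) (x : Fin n → Q) (a : Q) :
    ev c (Fin.snoc x a) = ev c.front x + c.last • a := by
  simp only [ev, Form.front, Form.last, Fin.sum_univ_castSucc, Fin.snoc_castSucc, Fin.snoc_last]
  abel

theorem ev_root (c : Form (n + 1)) (hc : c.last ≠ 0) (x : Fin n → Q) (a : Q) :
    ev c (Fin.snoc x a) = c.last • (a - ev c.root x) := by
  rw [ev_snoc, Form.root, ev_neg, ev_smul, sub_neg_eq_add, smul_add, smul_inv_smul₀ hc, add_comm]

theorem ev_subst (c : Form (n + 1)) (t : Form n) (x : Fin n → Q) :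
    ev (c.subst t) x = ev c (Fin.snoc x (ev t x)) := by
  rw [ev_snoc, Form.subst, ev_add, ev_smul]

theorem ev_memL (c : Form n) (x : Fin n → Q) (hx : ∀ i, x i ∈ L (Q := Q)) :
    ev c x ∈ L (Q := Q) :=
  add_mem (sum_mem fun i _ => L_smul _ (hx i)) (L_smul _ e_memL)

theorem ev_memZ (c : Form n) (x : Fin n → Q) (hx : ∀ i, x i ∈ Z (Q := Q))
    (h1 : ∀ i, ∃ a : ℤ, c.1 i = a) (h2 : ∃ a : ℤ, c.2 = a) :
    ev c x ∈ Z (Q := Q) := by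
  refine add_mem (sum_mem fun i _ => ?_) ?_
  · obtain ⟨a, ha⟩ := h1 i
    rw [ha]; exact int_smul_Z (hx i) a
  · obtain ⟨a, ha⟩ := h2
    rw [ha]; exact int_smul_Z e_memZ a

theorem ev_split (c : Form n) (z f : Fin n → Q) :
    ev c (z + f) = ev ((c.1, 0) : Form n) z + ev c f := by
  simp [ev, Finset.sum_add_distrib, add_assoc]

theorem ev_bdd (c : Form n) (f : Fin n → Q) (hf : ∀ i, 0 ≤ f i ∧ f i < e) (B : ℕ)
    (hB : ∑ i, |c.1 i| + |c.2| ≤ B) : |ev c f| ≤ B • (e : Q) := by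
  have he : |(e : Q)| = e := abs_of_pos e_pos
  calc |ev c f| ≤ |∑ i, c.1 i • f i| + |c.2 • (e : Q)| := abs_add_le _ _
    _ ≤ ∑ i, |c.1 i • f i| + |c.2 • (e : Q)| := by
        gcongr; exact Finset.abs_sum_le_sum_abs _ _
    _ ≤ ∑ i, |c.1 i| • (e : Q) + |c.2| • (e : Q) := by
        gcongr with i
        · rw [abs_smul, abs_of_nonneg (hf i).1]
          exact smul_le_smul_of_nonneg_left (hf i).2.le (abs_nonneg _)
        · rw [abs_smul, he]
    _ = (∑ i, |c.1 i| + |c.2|) • (e : Q) := by rw [add_smul, Finset.sum_smul]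
    _ ≤ (B : ℚ) • (e : Q) := smul_le_smul_of_nonneg_right hB e_pos.le
    _ = B • (e : Q) := Nat.cast_smul_eq_nsmul _ _ _

end ev

theorem common_den (F : Finset ℚ) : ∃ D : ℕ, 0 < D ∧ ∀ q ∈ F, ∃ a : ℤ, (D : ℚ) * q = a := by
  classical
  induction F using Finset.induction_on with
  | empty => exact ⟨1, one_pos, by simp⟩
  | insert p F _ ih =>
    obtain ⟨D, hD, h⟩ := ih
    refine ⟨p.den * D, Nat.mul_pos p.den_pos hD, fun q hq => ?_⟩
    rcases Finset.mem_insert.1 hq with rfl | hq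
    · refine ⟨q.num * D, ?_⟩
      push_cast
      rw [← Rat.den_mul_eq_num]; ring
    · obtain ⟨a, ha⟩ := h q hq
      refine ⟨p.den * a, ?_⟩
      push_cast
      rw [← ha]; ring

section two
variable {M N : Type*}
  [AddCommGroup M] [LinearOrder M] [IsOrderedAddMonoid M] [Module ℚ M]
  [AddCommGroup N] [LinearOrder N] [IsOrderedAddMonoid N] [Module ℚ N]
  [GGG M] [GGG N] {n : ℕ}

/-- agreement of sign, `Z` and `L` on a finite set of forms -/
def AgreeZ (S : Finset (Form n)) (z : Fin n → M) (w : Fin n → N) : Prop :=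
  ∀ c ∈ S, SameSign (ev c z) (ev c w) ∧ (ev c z ∈ Z (Q := M) ↔ ev c w ∈ Z (Q := N)) ∧
    (ev c z ∈ L (Q := M) ↔ ev c w ∈ L (Q := N))

/-- agreement of sign on a finite set of forms -/
def AgreeF (S : Finset (Form n)) (z : Fin n → M) (w : Fin n → N) : Prop :=
  ∀ c ∈ S, SameSign (ev c z) (ev c w)

theorem AgreeZ.mono {S T : Finset (Form n)} {z : Fin n → M} {w : Fin n → N} (h : AgreeZ T z w)
    (hST : S ⊆ T) : AgreeZ S z w := fun c hc => h c (hST hc)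

theorem AgreeF.mono {S T : Finset (Form n)} {z : Fin n → M} {w : Fin n → N} (h : AgreeF T z w)
    (hST : S ⊆ T) : AgreeF S z w := fun c hc => h c (hST hc)

theorem AgreeZ.symm {S : Finset (Form n)} {z : Fin n → M} {w : Fin n → N} (h : AgreeZ S z w) :
    AgreeZ S w z := fun c hc => ⟨(h c hc).1.symm, (h c hc).2.1.symm, (h c hc).2.2.symm⟩

theorem AgreeF.symm {S : Finset (Form n)} {z : Fin n → M} {w : Fin n → N} (h : AgreeF S z w) :
    AgreeF S w z := fun c hc => (h c hc).symm

theorem stepF (hQ : (∀ x : M, x ∈ L (Q := M)) ↔ (∀ x : N, x ∈ L (Q := N)))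
    (S₀ : Finset (Form (n + 1))) : ∃ S' : Finset (Form n), ∀ (f : Fin n → M) (g : Fin n → N),
      (∀ i, f i ∈ L (Q := M)) → (∀ i, g i ∈ L (Q := N)) → AgreeF S' f g →
      ∀ x : M, 0 ≤ x → x < e → ∃ y : N, 0 ≤ y ∧ y < e ∧
        AgreeF S₀ (Fin.snoc f x : Fin (n + 1) → M) (Fin.snoc g y : Fin (n + 1) → N) := by
  classical
  set p0 : Form (n + 1) := (Pi.single (Fin.last n) 1, 0) with hp0
  set p1 : Form (n + 1) := (Pi.single (Fin.last n) 1, -1) with hp1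
  set S := insert p0 (insert p1 S₀) with hS
  have main : ∃ S' : Finset (Form n), ∀ (f : Fin n → M) (g : Fin n → N),
      (∀ i, f i ∈ L (Q := M)) → (∀ i, g i ∈ L (Q := N)) → AgreeF S' f g →
      ∀ x : M, ∃ y : N,
        AgreeF S (Fin.snoc f x : Fin (n + 1) → M) (Fin.snoc g y : Fin (n + 1) → N) := by
    refine ⟨S.image Form.front ∪ (S ×ˢ S).image (fun p => p.1.root - p.2.root), ?_⟩
    intro f g hf hg hA x
    obtain ⟨y, hy⟩ := extend S (fun c => ev c.root f) (fun c => ev c.root g)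
      (by
        intro c hc d hd
        have := hA (c.root - d.root) (Finset.mem_union_right _ (Finset.mem_image.2
          ⟨(c, d), Finset.mem_product.2 ⟨hc, hd⟩, rfl⟩))
        rwa [ev_sub, ev_sub] at this)
      (by
        intro c hc d hd
        exact iff_of_true (sub_mem (ev_memL _ _ hf) (ev_memL _ _ hf))
          (sub_mem (ev_memL _ _ hg) (ev_memL _ _ hg))) hQ x
    refine ⟨y, fun c hc => ?_⟩
    by_cases h0 : c.last = 0
    · rw [ev_snoc, ev_snoc, h0, zero_smul, zero_smul, add_zero, add_zero]
      exact hA _ (Finset.mem_union_left _ (Finset.mem_image_of_mem _ hc))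
    · rw [ev_root c h0, ev_root c h0]
      exact (hy c hc).1.smul _
  obtain ⟨S', hS'⟩ := main
  refine ⟨S', fun f g hf hg hA x hx0 hx1 => ?_⟩
  obtain ⟨y, hy⟩ := hS' f g hf hg hA x
  have h0 := hy p0 (by simp [hS])
  have h1 := hy p1 (by simp [hS])
  have i0 : p0.front = Form.const n 0 := by
    ext i <;> simp [Form.front, Form.const, hp0]
  have i1 : p1.front = Form.const n (-1) := by
    ext i <;> simp [Form.front, Form.const, hp1]
  have l0 : p0.last = 1 := by simp [Form.last, hp0]
  have l1 : p1.last = 1 := by simp [Form.last, hp1]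
  rw [ev_snoc, ev_snoc, i0, ev_const, ev_const, l0] at h0
  rw [ev_snoc, ev_snoc, i1, ev_const, ev_const, l1] at h1
  simp only [zero_smul, one_smul, zero_add, neg_smul] at h0 h1
  refine ⟨y, ?_, ?_, hy.mono ?_⟩
  · rw [← not_lt, ← h0.2, not_lt]; exact hx0
  · have := h1.2
    rw [neg_add_lt_iff_lt_add, neg_add_lt_iff_lt_add, add_zero, add_zero] at this
    exact this.1 hx1
  · intro c hc
    simp [hS, hc]

theorem stepZ (hQ : (∀ x : M, x ∈ L (Q := M)) ↔ (∀ x : N, x ∈ L (Q := N)))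
    (S : Finset (Form (n + 1))) : ∃ S' : Finset (Form n), ∀ (z : Fin n → M) (w : Fin n → N),
      (∀ i, z i ∈ Z (Q := M)) → (∀ i, w i ∈ Z (Q := N)) → AgreeZ S' z w →
      ∀ x ∈ Z (Q := M), ∃ y ∈ Z (Q := N),
        AgreeZ S (Fin.snoc z x : Fin (n + 1) → M) (Fin.snoc w y : Fin (n + 1) → N) := by
  classical
  obtain ⟨m, hm, hmS⟩ := common_den (S.image Form.last)
  obtain ⟨D, hD, hDS⟩ := common_den
    (S.biUnion (fun c => Finset.univ.image c.root.1 ∪ {c.root.2}))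
  set T : Finset (Form n) := (S ×ˢ Finset.Icc (-(D * m : ℤ)) (D * m)).image
    (fun p => p.1.root + Form.const n (p.2 / D)) with hT
  set A1 := S.image Form.front with hA1
  set A2 := ((S ×ˢ S) ×ˢ Finset.Icc (-2 : ℤ) 2).image
    (fun p => p.1.1.root - p.1.2.root + Form.const n (p.2 * m)) with hA2
  set A3 := (S ×ˢ Finset.range m).image
    (fun p => p.1.front + Form.const n (p.1.last * p.2)) with hA3
  set A4 := (S ×ˢ T).image (fun p => p.1.subst p.2) with hA4
  refine ⟨A1 ∪ A2 ∪ A3 ∪ T ∪ A4, fun z w hz hw hA x hx => ?_⟩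
  have a1 : AgreeZ A1 z w := hA.mono (by intro c hc; simp only [Finset.mem_union]; tauto)
  have a2 : AgreeZ A2 z w := hA.mono (by intro c hc; simp only [Finset.mem_union]; tauto)
  have a3 : AgreeZ A3 z w := hA.mono (by intro c hc; simp only [Finset.mem_union]; tauto)
  have a4 : AgreeZ A4 z w := hA.mono (by intro c hc; simp only [Finset.mem_union]; tauto)
  have aT : AgreeZ T z w := hA.mono (by intro c hc; simp only [Finset.mem_union]; tauto)
  have hmQ : (0 : ℚ) < m := by exact_mod_cast hm
  have hDQ : (0 : ℚ) < D := by exact_mod_cast hD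
  by_cases hnear : ∃ c ∈ S, |x - ev c.root z| ≤ m • (e : M)
  · obtain ⟨c, hc, hcx⟩ := hnear
    have hZ : (D : ℚ) • (x - ev c.root z) ∈ Z (Q := M) := by
      rw [smul_sub]
      refine sub_mem ?_ ?_
      · exact int_smul_Z hx D
      · rw [← ev_smul]
        refine ev_memZ _ _ hz (fun i => ?_) ?_
        · exact hDS (c.root.1 i) (Finset.mem_biUnion.2 ⟨c, hc, by simp⟩)
        · exact hDS (c.root.2) (Finset.mem_biUnion.2 ⟨c, hc, by simp⟩)
    obtain ⟨k, hk, hk'⟩ := Z_bdd hZ (D * m) (by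
      rw [Nat.cast_smul_eq_nsmul, abs_nsmul, mul_nsmul']
      exact nsmul_le_nsmul_right hcx D)
    have hτ : c.root + Form.const n (k / D) ∈ T := by
      rw [hT, Finset.mem_image]
      refine ⟨(c, k), Finset.mem_product.2 ⟨hc, ?_⟩, rfl⟩
      rw [Finset.mem_Icc]
      push_cast at hk
      exact abs_le.1 hk
    set τ := c.root + Form.const n (k / D) with hτdef
    have hxτ : x = ev τ z := by
      rw [hτdef, ev_add, ev_const, div_eq_inv_mul, mul_smul, ← hk', inv_smul_smul₀ hDQ.ne']
      abel
    refine ⟨ev τ w, ?_, fun d hd => ?_⟩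
    · rw [← (aT τ hτ).2.1, ← hxτ]; exact hx
    · have := a4 (d.subst τ) (Finset.mem_image.2 ⟨(d, τ), Finset.mem_product.2 ⟨hd, hτ⟩, rfl⟩)
      rw [ev_subst, ev_subst, ← hxτ] at this
      exact this
  push Not at hnear
  obtain ⟨q, hq, hq1, hq2⟩ := floor ((m : ℚ)⁻¹ • x)
  have hmq : (m : ℚ) • q ∈ Z (Q := M) := int_smul_Z hq m
  have hq1' : (m : ℚ) • q ≤ x := by
    have := smul_le_smul_of_nonneg_left hq1 hmQ.le
    rwa [smul_inv_smul₀ hmQ.ne'] at this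
  have hq2' : x < (m : ℚ) • q + (m : ℚ) • (e : M) := by
    have := smul_lt_smul_of_pos_left hq2 hmQ
    rwa [smul_inv_smul₀ hmQ.ne', smul_add] at this
  obtain ⟨r, hr, hxr⟩ : ∃ r : ℕ, r < m ∧ x = (m : ℚ) • q + (r : ℚ) • (e : M) := by
    obtain ⟨k, hk, hk'⟩ := Z_bdd (sub_mem hx hmq) m (by
      rw [abs_of_nonneg (sub_nonneg.2 hq1'), ← Nat.cast_smul_eq_nsmul ℚ]
      grind)
    have k0 : (0 : ℚ) ≤ k := by
      have : 0 ≤ (k : ℚ) • (e : M) := hk' ▸ sub_nonneg.2 hq1'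
      by_contra hneg
      exact absurd this (not_le.2 (smul_neg_of_neg_of_pos (not_le.1 hneg) e_pos))
    have k1 : (k : ℚ) < m := by
      have : (k : ℚ) • (e : M) < (m : ℚ) • (e : M) := by rw [← hk']; grind
      exact lt_of_smul_lt_smul_right this e_pos.le
    have k0' : 0 ≤ k := by exact_mod_cast k0
    have k1' : k < m := by exact_mod_cast k1
    lift k to ℕ using k0'
    refine ⟨k, by exact_mod_cast k1', ?_⟩
    rw [Int.cast_natCast] at hk'
    rw [← hk']; abel
  obtain ⟨y, hy⟩ := extend (S ×ˢ ({-1, 1} : Finset ℤ))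
    (fun p => ev p.1.root z + ((p.2 : ℚ) * m) • (e : M))
    (fun p => ev p.1.root w + ((p.2 : ℚ) * m) • (e : N)) (by
      rintro ⟨c, i⟩ hci ⟨d, j⟩ hdj
      rw [Finset.mem_product] at hci hdj
      have hij : i - j ∈ Finset.Icc (-2 : ℤ) 2 := by
        have h1 := hci.2; have h2 := hdj.2
        simp only [Finset.mem_insert, Finset.mem_singleton] at h1 h2
        rw [Finset.mem_Icc]; omega
      have := (a2 _ (Finset.mem_image.2 ⟨((c, d), i - j), by simp [hci.1, hdj.1, -Finset.mem_Icc, hij],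
        rfl⟩)).1
      simp only [ev_add, ev_sub, ev_const] at this
      convert this using 1 <;> (push_cast; module)) (by
      rintro ⟨c, i⟩ hci ⟨d, j⟩ hdj
      rw [Finset.mem_product] at hci hdj
      have hij : i - j ∈ Finset.Icc (-2 : ℤ) 2 := by
        have h1 := hci.2; have h2 := hdj.2
        simp only [Finset.mem_insert, Finset.mem_singleton] at h1 h2
        rw [Finset.mem_Icc]; omega
      have := (a2 _ (Finset.mem_image.2 ⟨((c, d), i - j), by simp [hci.1, hdj.1, -Finset.mem_Icc, hij],
        rfl⟩)).2.2
      simp only [ev_add, ev_sub, ev_const] at this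
      convert this using 2 <;> (push_cast; module)) hQ x
  obtain ⟨q', hq', hq1'', hq2''⟩ := floor ((m : ℚ)⁻¹ • (y - (r : ℚ) • (e : N)))
  set y' : N := (m : ℚ) • q' + (r : ℚ) • (e : N) with hy'
  have hy'Z : y' ∈ Z (Q := N) := add_mem (int_smul_Z hq' m) (int_smul_Z e_memZ r)
  have hy1 : y' ≤ y := by
    have := smul_le_smul_of_nonneg_left hq1'' hmQ.le
    rw [smul_inv_smul₀ hmQ.ne'] at this
    grind
  have hy2 : y < y' + (m : ℚ) • (e : N) := by
    have := smul_lt_smul_of_pos_left hq2'' hmQ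
    rw [smul_inv_smul₀ hmQ.ne', smul_add] at this
    grind
  have hyL : y' - y ∈ L (Q := N) := by
    have : y - y' ∈ L (Q := N) :=
      convex _ (L_smul (m : ℚ) e_memL) _ (sub_nonneg.2 hy1) (by grind)
    simpa using neg_mem this
  refine ⟨y', hy'Z, fun c hc => ?_⟩
  have hZc : ev c (Fin.snoc z x : Fin (n + 1) → M) ∈ Z (Q := M) ↔
      ev c (Fin.snoc w y' : Fin (n + 1) → N) ∈ Z (Q := N) := by
    have := (a3 (c.front + Form.const n (c.last * r)) (Finset.mem_image.2 ⟨(c, r),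
      Finset.mem_product.2 ⟨hc, Finset.mem_range.2 hr⟩, rfl⟩)).2.1
    obtain ⟨a, ha⟩ := hmS c.last (Finset.mem_image_of_mem _ hc)
    have e1 : ev c (Fin.snoc z x : Fin (n + 1) → M) =
        (a : ℚ) • q + ev (c.front + Form.const n (c.last * r)) z := by
      rw [ev_snoc, ev_add, ev_const, hxr, ← ha]; module
    have e2 : ev c (Fin.snoc w y' : Fin (n + 1) → N) =
        (a : ℚ) • q' + ev (c.front + Form.const n (c.last * r)) w := by
      rw [ev_snoc, ev_add, ev_const, hy', ← ha]; module
    rw [e1, e2, add_mem_cancel_left (int_smul_Z hq a), add_mem_cancel_left (int_smul_Z hq' a), this]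
  by_cases h0 : c.last = 0
  · have := a1 c.front (Finset.mem_image_of_mem _ hc)
    simp only [ev_snoc, h0, zero_smul, add_zero]
    exact this
  · obtain ⟨hyc, hycL⟩ := hy (c, 1) (by simp [hc])
    obtain ⟨hyd, -⟩ := hy (c, -1) (by simp [hc])
    simp only [Int.cast_one, one_mul, Int.cast_neg, neg_mul, neg_smul] at hyc hycL hyd
    have hmM : 0 < (m : ℚ) • (e : M) := smul_pos hmQ e_pos
    have hmN : 0 < (m : ℚ) • (e : N) := smul_pos hmQ e_pos
    have hmLM : (m : ℚ) • (e : M) ∈ L (Q := M) := L_smul _ e_memL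
    have hmLN : (m : ℚ) • (e : N) ∈ L (Q := N) := L_smul _ e_memL
    have hsign : SameSign (x - ev c.root z) (y' - ev c.root w) := by
      have := hnear c hc
      rw [← Nat.cast_smul_eq_nsmul ℚ, lt_abs] at this
      rcases this with h | h
      · have h1 : 0 < x - (ev c.root z + (m : ℚ) • (e : M)) := by grind
        have h2 := hyc.1.1 h1
        have h3 : 0 < x - ev c.root z := by grind
        have h4 : 0 < y' - ev c.root w := by grind
        exact ⟨iff_of_true h3 h4, iff_of_false h3.not_gt h4.not_gt⟩
      · have h1 : x - (ev c.root z + -((m : ℚ) • (e : M))) < 0 := by grind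
        have h2 := hyd.2.1 h1
        have h3 : x - ev c.root z < 0 := by grind
        have h4 : y' - ev c.root w < 0 := by grind
        exact ⟨iff_of_false h3.not_gt h4.not_gt, iff_of_true h3 h4⟩
    have hLc : x - ev c.root z ∈ L (Q := M) ↔ y' - ev c.root w ∈ L (Q := N) := by
      have e1 : x - ev c.root z =
        (m : ℚ) • (e : M) + (x - (ev c.root z + (m : ℚ) • (e : M))) := by abel
      have e2 : y' - ev c.root w = ((y' - y) + (m : ℚ) • (e : N)) +
        (y - (ev c.root w + (m : ℚ) • (e : N))) := by abel
      rw [e1, e2, add_mem_cancel_left hmLM, add_mem_cancel_left (add_mem hyL hmLN), hycL]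
    refine ⟨?_, hZc, ?_⟩
    · rw [ev_root c h0, ev_root c h0]
      exact hsign.smul _
    · rw [ev_root c h0, ev_root c h0, L_smul_iff h0, L_smul_iff h0]
      exact hLc

theorem atomic (c : Form n) (h1 : ∀ i, ∃ a : ℤ, c.1 i = a) (h2 : ∃ a : ℤ, c.2 = a) :
    ∃ S T : Finset (Form n), ∀ (z f : Fin n → M) (w g : Fin n → N),
      (∀ i, z i ∈ Z (Q := M)) → (∀ i, w i ∈ Z (Q := N)) →
      (∀ i, 0 ≤ f i ∧ f i < e) → (∀ i, 0 ≤ g i ∧ g i < e) →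
      AgreeZ S z w → AgreeF T f g →
      SameSign (ev c (z + f)) (ev c (w + g)) ∧
      (ev c (z + f) ∈ Z (Q := M) ↔ ev c (w + g) ∈ Z (Q := N)) ∧
      (ev c (z + f) ∈ L (Q := M) ↔ ev c (w + g) ∈ L (Q := N)) := by
  classical
  obtain ⟨B, hB⟩ := exists_nat_ge (∑ i, |c.1 i| + |c.2|)
  set c0 : Form n := (c.1, 0) with hc0
  refine ⟨(Finset.Icc (-(B : ℤ)) B).image (fun k : ℤ => c0 - Form.const n k),
    (Finset.Icc (-(B : ℤ)) B).image (fun k : ℤ => c + Form.const n k), ?_⟩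
  intro z f w g hz hw hf hg hS hT
  have hsplit1 := ev_split c z f
  have hsplit2 := ev_split c w g
  rw [hsplit1, hsplit2]
  have hAZ : ev c0 z ∈ Z (Q := M) := ev_memZ c0 z hz h1 ⟨0, by simp [hc0]⟩
  have hAZ' : ev c0 w ∈ Z (Q := N) := ev_memZ c0 w hw h1 ⟨0, by simp [hc0]⟩
  have hF := ev_bdd c f hf B hB
  have hF' := ev_bdd c g hg B hB
  have hFL : ev c f ∈ L (Q := M) := ev_memL c f fun i => convex _ e_memL _ (hf i).1 (hf i).2.le
  have hFL' : ev c g ∈ L (Q := N) := ev_memL c g fun i => convex _ e_memL _ (hg i).1 (hg i).2.le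
  have sZ : ∀ k : ℤ, |k| ≤ B → SameSign (ev c0 z - (k : ℚ) • e) (ev c0 w - (k : ℚ) • e) := by
    intro k hk
    have := (hS _ (Finset.mem_image_of_mem _ (Finset.mem_Icc.2 (abs_le.1 hk)))).1
    simpa only [ev_sub, ev_const] using this
  have sF : ∀ k : ℤ, |k| ≤ B → SameSign (ev c f + (k : ℚ) • e) (ev c g + (k : ℚ) • e) := by
    intro k hk
    have := hT _ (Finset.mem_image_of_mem _ (Finset.mem_Icc.2 (abs_le.1 hk)))
    simpa only [ev_add, ev_const] using this
  have sL : ev c0 z ∈ L (Q := M) ↔ ev c0 w ∈ L (Q := N) := by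
    have h0 : (0 : ℤ) ∈ Finset.Icc (-(B : ℤ)) B := by simp
    have := (hS _ (Finset.mem_image_of_mem _ h0)).2.2
    simpa [ev_sub, ev_const] using this
  generalize ev c0 z = A at *
  generalize ev c0 w = A' at *
  generalize ev c f = F at *
  generalize ev c g = F' at *
  refine ⟨?_, ?_, ?_⟩
  · rw [abs_le, ← Nat.cast_smul_eq_nsmul ℚ] at hF hF'
    have hBp := sZ B (by simp)
    have hBn := sZ (-B) (by simp)
    push_cast at hBp hBn
    rw [neg_smul, neg_smul, sub_neg_eq_add, sub_neg_eq_add] at hBn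
    rcases lt_or_ge ((B : ℚ) • (e : M)) A with h | h
    · have h' : 0 < A' - (B : ℚ) • e := hBp.1.1 (sub_pos.2 h)
      have h3 : 0 < A + F := by grind
      have h4 : 0 < A' + F' := by grind
      exact ⟨iff_of_true h3 h4, iff_of_false h3.not_gt h4.not_gt⟩
    rcases lt_or_ge A (-((B : ℚ) • (e : M))) with h6 | h6
    · have h' : A' + (B : ℚ) • e < 0 := hBn.2.1 (by grind)
      have h3 : A + F < 0 := by grind
      have h4 : A' + F' < 0 := by grind
      exact ⟨iff_of_false h3.not_gt h4.not_gt, iff_of_true h3 h4⟩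
    obtain ⟨k, hk, hk'⟩ := Z_bdd hAZ B (by
      rw [abs_le, ← Nat.cast_smul_eq_nsmul ℚ]; exact ⟨h6, h⟩)
    have := (sZ k hk).eq_zero.1 (by rw [hk', sub_self])
    rw [hk', sub_eq_zero.1 this, add_comm, add_comm _ F']
    exact sF k hk
  · rw [add_mem_cancel_left hAZ, add_mem_cancel_left hAZ']
    constructor
    · intro h
      obtain ⟨k, hk, hk'⟩ := Z_bdd h B hF
      have := (sF (-k) (by simpa using hk)).eq_zero.1 (by rw [hk']; push_cast; module)
      rw [eq_neg_of_add_eq_zero_left this]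
      exact neg_mem (int_smul_Z e_memZ _)
    · intro h
      obtain ⟨k, hk, hk'⟩ := Z_bdd h B hF'
      have := (sF (-k) (by simpa using hk)).eq_zero.2 (by rw [hk']; push_cast; module)
      rw [eq_neg_of_add_eq_zero_left this]
      exact neg_mem (int_smul_Z e_memZ _)
  · rw [add_mem_cancel_right hFL, add_mem_cancel_right hFL', sL]

end two

section logic
open FirstOrder Language

/-- The `L3G`-structure is the one given by the abstract data. -/
structure Compat (Q : Type*) [L3G.Structure Q] [AddCommGroup Q] [LinearOrder Q]
    [IsOrderedAddMonoid Q] [Module ℚ Q] [GGG Q] : Prop where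
  add : ∀ x y : Q, L3G.add x y = x + y
  zero : L3G.zero Q = 0
  one : L3G.one Q = e
  lt : ∀ x y : Q, L3G.lt x y ↔ x < y
  inZ : ∀ x : Q, L3G.inZ x ↔ x ∈ Z (Q := Q)
  inL : ∀ x : Q, L3G.inL x ↔ x ∈ L (Q := Q)

theorem ev_single {Q : Type*} [AddCommGroup Q] [LinearOrder Q] [IsOrderedAddMonoid Q] [Module ℚ Q]
    [GGG Q] {n : ℕ} (i : Fin n) (x : Fin n → Q) : ev ((Pi.single i 1, 0) : Form n) x = x i := by
  simp [ev, Pi.single_apply]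

variable {M N : Type*} [L3G.Structure M] [L3G.Structure N]
  [AddCommGroup M] [LinearOrder M] [IsOrderedAddMonoid M] [Module ℚ M]
  [AddCommGroup N] [LinearOrder N] [IsOrderedAddMonoid N] [Module ℚ N]
  [GGG M] [GGG N] {n : ℕ}

theorem term_form (hM : Compat M) (hN : Compat N) (a : Empty → M) (b : Empty → N)
    (t : L3G.Term (Empty ⊕ Fin n)) :
    ∃ c : Form n, (∀ i, ∃ a : ℤ, c.1 i = a) ∧ (∃ a : ℤ, c.2 = a) ∧
      (∀ x : Fin n → M, t.realize (Sum.elim a x) = ev c x) ∧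
      (∀ x : Fin n → N, t.realize (Sum.elim b x) = ev c x) := by
  induction t with
  | var i =>
    rcases i with i | i
    · exact i.elim
    · refine ⟨(Pi.single i 1, 0), fun j => ?_, ⟨0, by simp⟩, fun x => ?_, fun x => ?_⟩
      · by_cases h : j = i
        · subst h; exact ⟨1, by simp⟩
        · exact ⟨0, by simp [h]⟩
      · rw [ev_single]; rfl
      · rw [ev_single]; rfl
  | @func l f ts ih =>
    match l, f with
    | 0, f =>
      have hf : f = L3G.zeroSym ∨ f = L3G.oneSym := by
        change Fin 2 at f
        change f = 0 ∨ f = 1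
        omega
      rcases hf with rfl | rfl
      · refine ⟨Form.const n 0, fun i => ⟨0, by simp [Form.const]⟩, ⟨0, by simp [Form.const]⟩,
          fun x => ?_, fun x => ?_⟩
        · rw [ev_const, zero_smul, ← hM.zero, Term.realize_func]
          exact congrArg _ (Subsingleton.elim _ _)
        · rw [ev_const, zero_smul, ← hN.zero, Term.realize_func]
          exact congrArg _ (Subsingleton.elim _ _)
      · refine ⟨Form.const n 1, fun i => ⟨0, by simp [Form.const]⟩, ⟨1, by simp [Form.const]⟩,
          fun x => ?_, fun x => ?_⟩
        · rw [ev_const, one_smul, ← hM.one, Term.realize_func]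
          exact congrArg _ (Subsingleton.elim _ _)
        · rw [ev_const, one_smul, ← hN.one, Term.realize_func]
          exact congrArg _ (Subsingleton.elim _ _)
    | 1, f => exact f.elim
    | 2, f =>
      obtain ⟨c, hc1, hc2, hcM, hcN⟩ := ih 0
      obtain ⟨d, hd1, hd2, hdM, hdN⟩ := ih 1
      refine ⟨c + d, fun i => ?_, ?_, fun x => ?_, fun x => ?_⟩
      · obtain ⟨k, hk⟩ := hc1 i
        obtain ⟨l, hl⟩ := hd1 i
        exact ⟨k + l, by simp [hk, hl]⟩
      · obtain ⟨k, hk⟩ := hc2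
        obtain ⟨l, hl⟩ := hd2
        exact ⟨k + l, by simp [hk, hl]⟩
      · rw [ev_add, ← hcM, ← hdM, ← hM.add, Term.realize_func]
        refine congrArg _ (funext fun i => ?_)
        fin_cases i <;> rfl
      · rw [ev_add, ← hcN, ← hdN, ← hN.add, Term.realize_func]
        refine congrArg _ (funext fun i => ?_)
        fin_cases i <;> rfl
    | (_ + 3), f => exact f.elim

theorem decompose {Q : Type*} [AddCommGroup Q] [LinearOrder Q] [IsOrderedAddMonoid Q] [Module ℚ Q]
    [GGG Q] (a : Q) : ∃ z ∈ Z (Q := Q), ∃ f : Q, 0 ≤ f ∧ f < e ∧ a = z + f := by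
  obtain ⟨z, hz, h1, h2⟩ := floor a
  exact ⟨z, hz, a - z, sub_nonneg.2 h1, by grind, by abel⟩

theorem snoc_add {Q : Type*} [Add Q] {n : ℕ} (z f : Fin n → Q) (a b : Q) :
    (Fin.snoc (z + f) (a + b) : Fin (n + 1) → Q) =
      (Fin.snoc z a : Fin (n + 1) → Q) + (Fin.snoc f b : Fin (n + 1) → Q) := by
  funext i
  refine Fin.lastCases ?_ (fun i => ?_) i <;> simp

/-- truth of `φ` is determined by finitely many conditions -/
def Determined (M N : Type*) [L3G.Structure M] [L3G.Structure N]
    [AddCommGroup M] [LinearOrder M] [IsOrderedAddMonoid M] [Module ℚ M]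
    [AddCommGroup N] [LinearOrder N] [IsOrderedAddMonoid N] [Module ℚ N]
    [GGG M] [GGG N] (a : Empty → M) (b : Empty → N) {n : ℕ}
    (φ : L3G.BoundedFormula Empty n) : Prop :=
  ∃ S T : Finset (Form n), ∀ (z f : Fin n → M) (w g : Fin n → N),
      (∀ i, z i ∈ Z (Q := M)) → (∀ i, w i ∈ Z (Q := N)) →
      (∀ i, 0 ≤ f i ∧ f i < e) → (∀ i, 0 ≤ g i ∧ g i < e) →
      AgreeZ S z w → AgreeF T f g →
      (φ.Realize a (z + f) ↔ φ.Realize b (w + g))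

theorem determined (hM : Compat M) (hN : Compat N)
    (hQ : (∀ x : M, x ∈ L (Q := M)) ↔ (∀ x : N, x ∈ L (Q := N)))
    (a : Empty → M) (b : Empty → N)
    (φ : L3G.BoundedFormula Empty n) : Determined M N a b φ := by
  classical
  have binary : ∀ {n : ℕ} (t₁ t₂ : L3G.Term (Empty ⊕ Fin n)),
    ∃ c : Form n, (∀ i, ∃ a : ℤ, c.1 i = a) ∧ (∃ a : ℤ, c.2 = a) ∧
      (∀ x : Fin n → M, t₂.realize (Sum.elim a x) - t₁.realize (Sum.elim a x) = ev c x) ∧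
      (∀ x : Fin n → N, t₂.realize (Sum.elim b x) - t₁.realize (Sum.elim b x) = ev c x) := by
    intro n t₁ t₂
    obtain ⟨c, hc1, hc2, hcM, hcN⟩ := term_form hM hN a b t₂
    obtain ⟨d, hd1, hd2, hdM, hdN⟩ := term_form hM hN a b t₁
    refine ⟨c - d, fun i => ?_, ?_, fun x => ?_, fun x => ?_⟩
    · obtain ⟨k, hk⟩ := hc1 i
      obtain ⟨l, hl⟩ := hd1 i
      exact ⟨k - l, by simp [hk, hl]⟩
    · obtain ⟨k, hk⟩ := hc2
      obtain ⟨l, hl⟩ := hd2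
      exact ⟨k - l, by simp [hk, hl]⟩
    · rw [ev_sub, hcM, hdM]
    · rw [ev_sub, hcN, hdN]
  induction φ with
  | falsum => exact ⟨∅, ∅, fun _ _ _ _ _ _ _ _ _ _ => Iff.rfl⟩
  | equal t₁ t₂ =>
    obtain ⟨c, hc1, hc2, hcM, hcN⟩ := binary t₁ t₂
    obtain ⟨S, T, h⟩ := atomic (M := M) (N := N) c hc1 hc2
    refine ⟨S, T, fun z f w g hz hw hf hg hS hT => ?_⟩
    have := (h z f w g hz hw hf hg hS hT).1.eq_zero
    rw [← hcM, ← hcN, sub_eq_zero, sub_eq_zero, eq_comm, @eq_comm N] at this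
    exact this
  | @rel n l R ts =>
    match l, R with
    | 0, R => exact R.elim
    | 1, R =>
      obtain ⟨c, hc1, hc2, hcM, hcN⟩ := term_form hM hN a b (ts 0)
      obtain ⟨S, T, h⟩ := atomic (M := M) (N := N) c hc1 hc2
      refine ⟨S, T, fun z f w g hz hw hf hg hS hT => ?_⟩
      obtain ⟨-, h2, h3⟩ := h z f w g hz hw hf hg hS hT
      have hR : R = L3G.zSym ∨ R = L3G.lSym := by
        change Fin 2 at R
        change R = 0 ∨ R = 1
        omega
      have eM : (fun i => (ts i).realize (Sum.elim a (z + f))) =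
          ![(ts 0).realize (Sum.elim a (z + f))] := by
        funext i; fin_cases i; rfl
      have eN : (fun i => (ts i).realize (Sum.elim b (w + g))) =
          ![(ts 0).realize (Sum.elim b (w + g))] := by
        funext i; fin_cases i; rfl
      change Structure.RelMap R (fun i => (ts i).realize (Sum.elim a (z + f))) ↔
        Structure.RelMap R (fun i => (ts i).realize (Sum.elim b (w + g)))
      rw [eM, eN]
      rcases hR with rfl | rfl
      · rw [← hcM, ← hcN, ← hM.inZ, ← hN.inZ] at h2
        exact h2
      · rw [← hcM, ← hcN, ← hM.inL, ← hN.inL] at h3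
        exact h3
    | 2, R =>
      obtain ⟨c, hc1, hc2, hcM, hcN⟩ := binary (ts 0) (ts 1)
      obtain ⟨S, T, h⟩ := atomic (M := M) (N := N) c hc1 hc2
      refine ⟨S, T, fun z f w g hz hw hf hg hS hT => ?_⟩
      have h1 := (h z f w g hz hw hf hg hS hT).1.1
      have eM : (fun i => (ts i).realize (Sum.elim a (z + f))) =
          ![(ts 0).realize (Sum.elim a (z + f)), (ts 1).realize (Sum.elim a (z + f))] := by
        funext i; fin_cases i <;> rfl
      have eN : (fun i => (ts i).realize (Sum.elim b (w + g))) =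
          ![(ts 0).realize (Sum.elim b (w + g)), (ts 1).realize (Sum.elim b (w + g))] := by
        funext i; fin_cases i <;> rfl
      change Structure.RelMap R (fun i => (ts i).realize (Sum.elim a (z + f))) ↔
        Structure.RelMap R (fun i => (ts i).realize (Sum.elim b (w + g)))
      rw [eM, eN]
      rw [← hcM, ← hcN, sub_pos, sub_pos, ← hM.lt, ← hN.lt] at h1
      exact h1
    | (_ + 3), R => exact R.elim
  | imp φ ψ ih1 ih2 =>
    obtain ⟨S1, T1, h1⟩ := ih1
    obtain ⟨S2, T2, h2⟩ := ih2
    refine ⟨S1 ∪ S2, T1 ∪ T2, fun z f w g hz hw hf hg hS hT => ?_⟩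
    rw [BoundedFormula.realize_imp, BoundedFormula.realize_imp,
      h1 z f w g hz hw hf hg (hS.mono Finset.subset_union_left) (hT.mono Finset.subset_union_left),
      h2 z f w g hz hw hf hg (hS.mono Finset.subset_union_right) (hT.mono Finset.subset_union_right)]
  | all φ ih =>
    obtain ⟨S, T, h⟩ := ih
    obtain ⟨S1, hS1⟩ := stepZ (M := M) (N := N) hQ S
    obtain ⟨S2, hS2⟩ := stepZ (M := N) (N := M) hQ.symm S
    obtain ⟨T1, hT1⟩ := stepF (M := M) (N := N) hQ T
    obtain ⟨T2, hT2⟩ := stepF (M := N) (N := M) hQ.symm T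
    refine ⟨S1 ∪ S2, T1 ∪ T2, fun z f w g hz hw hf hg hS hT => ?_⟩
    have hfL : ∀ i, f i ∈ L (Q := M) := fun i => convex _ e_memL _ (hf i).1 (hf i).2.le
    have hgL : ∀ i, g i ∈ L (Q := N) := fun i => convex _ e_memL _ (hg i).1 (hg i).2.le
    have snocP : ∀ (P : M → Prop) {k : ℕ} (s : Fin k → M) (x : M), (∀ i, P (s i)) →
        P x → ∀ i, P ((Fin.snoc s x : Fin (k + 1) → M) i) := by
      intro P k s x hs hx i
      refine Fin.lastCases ?_ (fun i => ?_) i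
      · simpa using hx
      · simpa using hs i
    have snocP' : ∀ (P : N → Prop) {k : ℕ} (s : Fin k → N) (x : N), (∀ i, P (s i)) →
        P x → ∀ i, P ((Fin.snoc s x : Fin (k + 1) → N) i) := by
      intro P k s x hs hx i
      refine Fin.lastCases ?_ (fun i => ?_) i
      · simpa using hx
      · simpa using hs i
    rw [BoundedFormula.realize_all, BoundedFormula.realize_all]
    constructor
    · intro hall y
      obtain ⟨w', hw', g', hg0, hg1, rfl⟩ := decompose y
      obtain ⟨z', hz', hA⟩ := hS2 w z hw hz (hS.mono Finset.subset_union_right).symm w' hw'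
      obtain ⟨f', hf0, hf1, hF⟩ := hT2 g f hgL hfL (hT.mono Finset.subset_union_right).symm g' hg0 hg1
      have := hall (z' + f')
      rw [snoc_add] at this ⊢
      refine (h _ _ _ _ ?_ ?_ ?_ ?_ hA.symm hF.symm).1 this
      · exact snocP (fun x => x ∈ Z (Q := M)) z z' hz hz'
      · exact snocP' (fun x => x ∈ Z (Q := N)) w w' hw hw'
      · exact snocP (fun x : M => 0 ≤ x ∧ x < e) f f' hf ⟨hf0, hf1⟩
      · exact snocP' (fun x : N => 0 ≤ x ∧ x < e) g g' hg ⟨hg0, hg1⟩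
    · intro hall y
      obtain ⟨z', hz', f', hf0, hf1, rfl⟩ := decompose y
      obtain ⟨w', hw', hA⟩ := hS1 z w hz hw (hS.mono Finset.subset_union_left) z' hz'
      obtain ⟨g', hg0, hg1, hF⟩ := hT1 f g hfL hgL (hT.mono Finset.subset_union_left) f' hf0 hf1
      have := hall (w' + g')
      rw [snoc_add] at this ⊢
      refine (h _ _ _ _ ?_ ?_ ?_ ?_ hA hF).2 this
      · exact snocP (fun x => x ∈ Z (Q := M)) z z' hz hz'
      · exact snocP' (fun x => x ∈ Z (Q := N)) w w' hw hw'
      · exact snocP (fun x : M => 0 ≤ x ∧ x < e) f f' hf ⟨hf0, hf1⟩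
      · exact snocP' (fun x : N => 0 ≤ x ∧ x < e) g g' hg ⟨hg0, hg1⟩

theorem const_memZ {Q : Type*} [AddCommGroup Q] [LinearOrder Q] [IsOrderedAddMonoid Q] [Module ℚ Q]
    [GGG Q] (q : ℚ) (h : q • (e : Q) ∈ Z (Q := Q)) : ∃ k : ℤ, q = k := by
  obtain ⟨B, hB⟩ := exists_nat_ge |q|
  obtain ⟨k, -, hk⟩ := Z_bdd h B (by
    rw [abs_smul, abs_of_pos (e_pos (Q := Q)), ← Nat.cast_smul_eq_nsmul ℚ]
    exact smul_le_smul_of_nonneg_right hB e_pos.le)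
  exact ⟨k, smul_left_injective ℚ (e_pos (Q := Q)).ne' hk⟩

theorem abstract_main (hM : Compat M) (hN : Compat N)
    (hQ : (∀ x : M, x ∈ L (Q := M)) ↔ (∀ x : N, x ∈ L (Q := N))) :
    L3G.ElementarilyEquivalent M N := by
  rw [elementarilyEquivalent_iff]
  intro φ
  obtain ⟨S, T, h⟩ := determined hM hN hQ default default φ
  have ev0 : ∀ (c : Form 0) (x : Fin 0 → M) (y : Fin 0 → N), SameSign (ev c x) (ev c y) := by
    intro c x y
    have h1 : SameSign (e : M) (e : N) :=
      ⟨iff_of_true e_pos e_pos, iff_of_false e_pos.not_gt e_pos.not_gt⟩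
    simpa [ev] using h1.smul c.2
  have hS : AgreeZ S (default : Fin 0 → M) (default : Fin 0 → N) := by
    intro c _
    refine ⟨ev0 c _ _, ?_, iff_of_true (ev_memL _ _ fun i => i.elim0)
      (ev_memL _ _ fun i => i.elim0)⟩
    have h1 : ev c (default : Fin 0 → M) = c.2 • e := by simp [ev]
    have h2 : ev c (default : Fin 0 → N) = c.2 • e := by simp [ev]
    rw [h1, h2]
    constructor
    · intro h
      obtain ⟨k, hk⟩ := const_memZ _ h
      rw [hk]; exact int_smul_Z e_memZ k
    · intro h
      obtain ⟨k, hk⟩ := const_memZ _ h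
      rw [hk]; exact int_smul_Z e_memZ k
  have key := h default default default default (fun i => i.elim0) (fun i => i.elim0)
    (fun i => i.elim0) (fun i => i.elim0) hS (fun c _ => ev0 c _ _)
  have e1 : (default + default : Fin 0 → M) = default := Subsingleton.elim _ _
  have e2 : (default + default : Fin 0 → N) = default := Subsingleton.elim _ _
  rw [e1, e2] at key
  exact key

end logic

section build

theorem ratModule (Q : Type*) [AddCommGroup Q] [LinearOrder Q] [IsOrderedAddMonoid Q]
    (hdiv : ∀ (x : Q) (n : ℕ), 0 < n → ∃ y : Q, n • y = x) : Nonempty (Module ℚ Q) := by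
  choose! d hd using hdiv
  have inj : ∀ (k : ℤ), k ≠ 0 → ∀ x y : Q, k • x = k • y → x = y :=
    fun k hk x y h => zsmul_right_injective hk h
  let s : ℚ → Q → Q := fun q x => d (q.num • x) q.den
  have hs : ∀ (q : ℚ) (x : Q), (q.den : ℤ) • s q x = q.num • x := by
    intro q x
    rw [natCast_zsmul]
    exact hd _ _ q.den_pos
  have key : ∀ (a b : ℤ) (q : ℚ) (x : Q), (b : ℚ) * q = a → b • s q x = a • x := by
    intro a b q x h
    have hden : (q.den : ℤ) ≠ 0 := by exact_mod_cast q.den_nz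
    apply inj _ hden
    rw [smul_comm, hs, smul_smul, smul_smul]
    congr 1
    have : ((b * q.num : ℤ) : ℚ) = ((q.den * a : ℤ) : ℚ) := by
      push_cast
      rw [← h, ← Rat.den_mul_eq_num]; ring
    exact_mod_cast this
  have dz : ∀ q : ℚ, (q.den : ℤ) ≠ 0 := fun q => by exact_mod_cast q.den_nz
  have dn : ∀ q : ℚ, ((q.den : ℤ) : ℚ) * q = q.num := fun q => by
    push_cast; exact Rat.den_mul_eq_num q
  refine ⟨{ smul := s, one_smul := ?_, mul_smul := ?_, smul_zero := ?_, smul_add := ?_,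
            add_smul := ?_, zero_smul := ?_ }⟩
  · intro p q x
    change s (p * q) x = s p (s q x)
    apply inj (p.den * q.den) (mul_ne_zero (dz p) (dz q))
    rw [key (p.num * q.num) _ (p * q) x (by
      push_cast; rw [← Rat.den_mul_eq_num, ← Rat.den_mul_eq_num q]; ring)]
    rw [mul_comm (p.den : ℤ), mul_smul (q.den : ℤ), hs p, smul_comm, hs q, smul_smul]
  · intro x
    change s 1 x = x
    have := key 1 1 1 x (by simp)
    simpa using this
  · intro q
    change s q 0 = 0
    apply inj _ (dz q)
    rw [hs]; simp
  · intro q x y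
    change s q (x + y) = s q x + s q y
    apply inj _ (dz q)
    rw [smul_add, hs, hs, hs, smul_add]
  · intro p q x
    change s (p + q) x = s p x + s q x
    apply inj (p.den * q.den) (mul_ne_zero (dz p) (dz q))
    rw [key (p.num * q.den + q.num * p.den) _ (p + q) x (by
      push_cast; rw [← Rat.den_mul_eq_num, ← Rat.den_mul_eq_num q]; ring)]
    rw [smul_add, add_smul]
    congr 1
    · rw [key (p.num * q.den) _ p x (by push_cast; rw [← Rat.den_mul_eq_num]; ring)]
    · rw [key (q.num * p.den) _ q x (by push_cast; rw [← Rat.den_mul_eq_num]; ring)]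
  · intro x
    change s 0 x = 0
    have := key 0 1 0 x (by simp)
    simpa using this

theorem exists_compat (M : Type*) [L3G.Structure M] (h : L3G.IsGGGStructure M) :
    ∃ (_ : AddCommGroup M) (_ : LinearOrder M) (_ : IsOrderedAddMonoid M) (_ : Module ℚ M)
      (_ : GGG M), Compat M := by
  classical
  obtain ⟨assoc, comm, add0, neg, irr, trans, tri, addlt, div, Z0, Zadd, Zneg, Z1, pos1, least1,
    fl, L0, Ladd, Lneg, conv, L1⟩ := h
  choose ng hng using neg
  let _ : Add M := ⟨L3G.add⟩
  let _ : Zero M := ⟨L3G.zero M⟩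
  let _ : Neg M := ⟨ng⟩
  let i1 : AddCommGroup M :=
    { add := L3G.add
      zero := L3G.zero M
      neg := ng
      add_assoc := assoc
      add_comm := comm
      zero_add := fun x => (comm _ _).trans (add0 x)
      add_zero := add0
      nsmul := nsmulRec
      zsmul := zsmulRec
      neg_add_cancel := fun x => (comm _ _).trans (hng x) }
  let i2 : LinearOrder M :=
    { le := fun x y => ¬ L3G.lt y x
      lt := L3G.lt
      le_refl := irr
      le_trans := by
        intro x y z h1 h2 h3
        rcases tri x y with h | h | h
        · exact h2 (trans _ _ _ h3 h)
        · subst h; exact h2 h3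
        · exact h1 h
      lt_iff_le_not_ge := by
        intro x y
        refine ⟨fun h => ⟨fun h' => irr _ (trans _ _ _ h h'), not_not.2 h⟩, fun h => not_not.1 h.2⟩
      le_antisymm := by
        intro x y h1 h2
        rcases tri x y with h | h | h
        · exact absurd h h2
        · exact h
        · exact absurd h h1
      le_total := by
        intro x y
        by_contra h
        push Not at h
        exact irr _ (trans _ _ _ h.1 h.2)
      toDecidableLE := Classical.decRel _ }
  have hlt : ∀ x y : M, L3G.lt x y ↔ x < y := fun _ _ => Iff.rfl
  have hadd : ∀ x y : M, L3G.add x y = x + y := fun _ _ => rfl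
  have hzero : L3G.zero M = 0 := rfl
  simp only [hadd, hzero, hlt] at *
  have i3 : IsOrderedAddMonoid M :=
    { add_le_add_left := by
        intro a b hab c
        rcases hab.lt_or_eq with h | h
        · exact (addlt a b c h).le
        · rw [h] }
  have hns : ∀ (n : ℕ) (x : M), L3G.nsmul n x = n • x := by
    intro n x
    induction n with
    | zero => rw [zero_smul]; rfl
    | succ n ih =>
      rw [succ_nsmul', ← ih]; rfl
  obtain ⟨i4⟩ := ratModule M (fun x n hn => by
    obtain ⟨y, hy⟩ := div x n hn
    exact ⟨y, by rw [← hns]; exact hy⟩)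
  let i5 : GGG M :=
    { e := L3G.one M
      Z := { carrier := {x | L3G.inZ x}
             add_mem' := fun {a b} ha hb => Zadd a b ha hb
             zero_mem' := Z0
             neg_mem' := fun {a} ha => Zneg a (-a) ha (add_neg_cancel a) }
      L := { carrier := {x | L3G.inL x}
             add_mem' := fun {a b} ha hb => Ladd a b ha hb
             zero_mem' := L0
             neg_mem' := fun {a} ha => Lneg a (-a) ha (add_neg_cancel a) }
      e_pos := pos1
      e_memZ := Z1
      least := fun x hx h => not_lt.1 (least1 x hx h)
      floor := fun x => by
        obtain ⟨n, h1, h2, h3⟩ := fl x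
        exact ⟨n, h1, not_lt.1 h2, h3⟩
      convex := fun x hx y h0 h1 => conv 0 x y L0 hx (not_lt.2 h0) (not_lt.2 h1)
      e_memL := L1 }
  exact ⟨i1, i2, i3, i4, i5, ⟨fun _ _ => rfl, rfl, rfl, fun _ _ => Iff.rfl, fun _ => Iff.rfl,
    fun _ => Iff.rfl⟩⟩

end build

end GGGProof

theorem stmt_14 (M N : Type*) [L3G.Structure M] [L3G.Structure N]
    (hM : L3G.IsGGGStructure M) (hN : L3G.IsGGGStructure N)
    (hQL : (∀ x : M, L3G.inL x) ↔ (∀ x : N, L3G.inL x)) :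
    L3G.ElementarilyEquivalent M N := by
  obtain ⟨_, _, _, _, _, cM⟩ := GGGProof.exists_compat M hM
  obtain ⟨_, _, _, _, _, cN⟩ := GGGProof.exists_compat N hN
  refine GGGProof.abstract_main cM cN ?_
  simpa only [cM.inL, cN.inL] using hQL
end
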